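/- arXiv:2212.10350 — 4 statements merged into one kernel-verified Lean document; each statement's English description precedes it below -/
import Mathlib

section
/- Let Γ be a symmetric d×d real matrix with zero diagonal that is strictly conditionally negative definite and satisfies the metric property Γ_{ij} ≤ Γ_{ik} + Γ_{jk} for all i, j, k ∈ {1, …, d}. Fix k ∈ {1, …, d}, let Σ^{(k)} be the Farris transform of Γ at k (which is positive definite), and let W = (W_i)_{i ≠ k} be a multivariate Gaussian random vector with covariance matrix Σ^{(k)} and mean vector (−Σ^{(k)}_{ii}/2)_{i ≠ k}. Let E be a standard exponential random variable independent of W. Then the d-dimensional random vector Y defined by Y_k = E and Y_i = E + W_i for i ≠ k is positively associated. -/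
open MeasureTheory Matrix

/-- A random vector `X` (with coordinates indexed by `ι`) is positively associated if
`Cov(f(X), g(X)) ≥ 0` for all bounded measurable coordinatewise-nondecreasing
functions `f, g`. -/
def PositivelyAssociated {Ω ι : Type*} [MeasurableSpace Ω]
    (μ : Measure Ω) (X : Ω → (ι → ℝ)) : Prop :=
  ∀ f g : (ι → ℝ) → ℝ, Measurable f → Measurable g →
    (∃ C, ∀ x, |f x| ≤ C) → (∃ C, ∀ x, |g x| ≤ C) →
    Monotone f → Monotone g →
    0 ≤ (∫ ω, f (X ω) * g (X ω) ∂μ) - (∫ ω, f (X ω) ∂μ) * (∫ ω, g (X ω) ∂μ)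

/-- The Farris transform `Σ^{(k)}` of `Γ` at `k`,
`Σ^{(k)}_{ij} = (Γ_{ik} + Γ_{jk} − Γ_{ij})/2` for `i, j ≠ k`. -/
noncomputable def farris {d : ℕ} (Γ : Matrix (Fin d) (Fin d) ℝ) (k : Fin d) :
    Matrix {i : Fin d // i ≠ k} {i : Fin d // i ≠ k} ℝ :=
  Matrix.of fun i j => (Γ (i : Fin d) k + Γ (j : Fin d) k - Γ (i : Fin d) (j : Fin d)) / 2

/-- The density of a multivariate Gaussian with mean `m` and (positive definite)
covariance matrix `S`. -/
noncomputable def gaussDensity {n : Type*} [Fintype n] [DecidableEq n]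
    (m : n → ℝ) (S : Matrix n n ℝ) (x : n → ℝ) : ℝ :=
  (Real.sqrt ((2 * Real.pi) ^ (Fintype.card n) * S.det))⁻¹ *
    Real.exp (-(1 / 2) * ((x - m) ⬝ᵥ S⁻¹.mulVec (x - m)))

namespace HR

section
/-- covariance functional -/
noncomputable def Cv {α : Type*} [MeasurableSpace α] (ν : Measure α) (f g : α → ℝ) : ℝ :=
  (∫ x, f x * g x ∂ν) - (∫ x, f x ∂ν) * (∫ x, g x ∂ν)

/-- bounded measurable -/
def BM {α : Type*} [MeasurableSpace α] (f : α → ℝ) : Prop :=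
  Measurable f ∧ ∃ C, ∀ x, |f x| ≤ C

/-- association of a measure -/
def Assoc {α : Type*} [MeasurableSpace α] [Preorder α] (ν : Measure α) : Prop :=
  ∀ f g : α → ℝ, BM f → BM g → Monotone f → Monotone g → 0 ≤ Cv ν f g

section
variable {α β : Type*} [MeasurableSpace α] [MeasurableSpace β]

lemma BM.integrable {f : α → ℝ} (hf : BM f) (ν : Measure α) [IsFiniteMeasure ν] :
    Integrable f ν := by
  obtain ⟨hm, C, hC⟩ := hf
  exact Integrable.of_bound hm.aestronglyMeasurable C (Filter.Eventually.of_forall hC)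

lemma BM.mul {f g : α → ℝ} (hf : BM f) (hg : BM g) : BM (fun x => f x * g x) := by
  obtain ⟨hm, C, hC⟩ := hf
  obtain ⟨hm', C', hC'⟩ := hg
  refine ⟨hm.mul hm', C * C', fun x => ?_⟩
  rw [abs_mul]
  exact mul_le_mul (hC x) (hC' x) (abs_nonneg _) ((abs_nonneg _).trans (hC x))

lemma BM.comp {f : α → ℝ} (hf : BM f) {φ : β → α} (hφ : Measurable φ) : BM (fun x => f (φ x)) :=
  ⟨hf.1.comp hφ, hf.2.imp fun _ h x => h _⟩

lemma abs_integral_le_of_bound {f : α → ℝ} {C : ℝ} (ν : Measure α) [IsProbabilityMeasure ν]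
    (hC : ∀ x, |f x| ≤ C) : |∫ x, f x ∂ν| ≤ C := by
  have := norm_integral_le_of_norm_le_const (μ := ν) (f := f) (C := C)
    (Filter.Eventually.of_forall hC)
  simpa using this

lemma BM.integral_right {F : α × β → ℝ} (hF : BM F) (ν : Measure β) [IsProbabilityMeasure ν] :
    BM (fun x => ∫ y, F (x, y) ∂ν) := by
  obtain ⟨hm, C, hC⟩ := hF
  refine ⟨(hm.stronglyMeasurable.integral_prod_right').measurable, C, fun x => ?_⟩
  exact abs_integral_le_of_bound ν fun y => hC _

lemma Cv_prod {F G : α × β → ℝ} (hF : BM F) (hG : BM G) (μ : Measure α) (ν : Measure β)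
    [IsProbabilityMeasure μ] [IsProbabilityMeasure ν] {K : ℝ}
    (hK : ∀ x, K ≤ Cv ν (fun y => F (x, y)) (fun y => G (x, y))) :
    Cv μ (fun x => ∫ y, F (x, y) ∂ν) (fun x => ∫ y, G (x, y) ∂ν) + K ≤ Cv (μ.prod ν) F G := by
  have hF' := hF.integral_right ν
  have hG' := hG.integral_right ν
  have hFG' := (hF.mul hG).integral_right ν
  have h : Cv (μ.prod ν) F G - Cv μ (fun x => ∫ y, F (x, y) ∂ν) (fun x => ∫ y, G (x, y) ∂ν)
      = ∫ x, Cv ν (fun y => F (x, y)) (fun y => G (x, y)) ∂μ := by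
    unfold Cv
    rw [integral_prod _ (hF.integrable _), integral_prod _ (hG.integrable _),
      integral_prod _ ((hF.mul hG).integrable _),
      integral_sub (hFG'.integrable _) ((hF'.mul hG').integrable _)]
    ring
  have h2 : K ≤ ∫ x, Cv ν (fun y => F (x, y)) (fun y => G (x, y)) ∂μ := by
    have := integral_mono (μ := μ) (f := fun _ => K) (integrable_const K)
      (g := fun x => Cv ν (fun y => F (x, y)) (fun y => G (x, y)))
      ((hFG'.integrable _).sub ((hF'.mul hG').integrable _)) hK
    simpa using this
  linarith

lemma Cv_map {f g : α → ℝ} (hf : BM f) (hg : BM g) (ν : Measure β) {φ : β → α}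
    (hφ : Measurable φ) : Cv (ν.map φ) f g = Cv ν (fun x => f (φ x)) (fun x => g (φ x)) := by
  unfold Cv
  rw [integral_map hφ.aemeasurable (hf.mul hg).1.aestronglyMeasurable,
    integral_map hφ.aemeasurable hf.1.aestronglyMeasurable,
    integral_map hφ.aemeasurable hg.1.aestronglyMeasurable]

lemma Cv_conv {M : Type*} [AddMonoid M] [MeasurableSpace M] [MeasurableAdd₂ M]
    {f g : M → ℝ} (hf : BM f) (hg : BM g) (μ ν : Measure M)
    [IsProbabilityMeasure μ] [IsProbabilityMeasure ν] {K : ℝ}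
    (hK : ∀ x, K ≤ Cv ν (fun y => f (x + y)) (fun y => g (x + y))) :
    Cv μ (fun x => ∫ y, f (x + y) ∂ν) (fun x => ∫ y, g (x + y) ∂ν) + K ≤ Cv (μ ∗ ν) f g := by
  have hadd : Measurable (fun p : M × M => p.1 + p.2) := measurable_add
  unfold Measure.conv
  rw [Cv_map hf hg _ hadd]
  exact Cv_prod (hf.comp hadd) (hg.comp hadd) μ ν hK

lemma Assoc.map [Preorder α] [Preorder β] {ν : Measure β} (h : Assoc ν) {φ : β → α}
    (hφ : Measurable φ) (hmono : Monotone φ) : Assoc (ν.map φ) := by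
  intro f g hf hg hf' hg'
  rw [Cv_map hf hg _ hφ]
  exact h _ _ (hf.comp hφ) (hg.comp hφ) (hf'.comp hmono) (hg'.comp hmono)

lemma mono_integral {ι : Type*} {f : (ι → ℝ) → ℝ} (hf : BM f) (hm : Monotone f)
    (ν : Measure (ι → ℝ)) [IsProbabilityMeasure ν] : Monotone fun x => ∫ y, f (x + y) ∂ν := by
  intro a b hab
  refine integral_mono ((hf.comp (measurable_const_add a)).integrable ν)
    ((hf.comp (measurable_const_add b)).integrable ν) fun y => ?_
  exact hm (by gcongr)

lemma BM.integral_add {ι : Type*} [Fintype ι] {f : (ι → ℝ) → ℝ} (hf : BM f)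
    (ν : Measure (ι → ℝ)) [IsProbabilityMeasure ν] : BM fun x => ∫ y, f (x + y) ∂ν :=
  (hf.comp (φ := fun p : (ι → ℝ) × (ι → ℝ) => p.1 + p.2) measurable_add).integral_right ν

lemma Assoc.translate {ι : Type*} {ν : Measure (ι → ℝ)} (h : Assoc ν) {f g : (ι → ℝ) → ℝ}
    (hf : BM f) (hg : BM g) (hf' : Monotone f) (hg' : Monotone g) (x : ι → ℝ) :
    0 ≤ Cv ν (fun y => f (x + y)) (fun y => g (x + y)) :=
  h _ _ (hf.comp (measurable_const_add x)) (hg.comp (measurable_const_add x))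
    (fun a b hab => hf' (by gcongr)) (fun a b hab => hg' (by gcongr))

lemma Assoc.conv {ι : Type*} [Fintype ι] {μ ν : Measure (ι → ℝ)}
    [IsProbabilityMeasure μ] [IsProbabilityMeasure ν] (h : Assoc μ) (h' : Assoc ν) :
    Assoc (μ ∗ ν) := by
  intro f g hf hg hf' hg'
  have := Cv_conv hf hg μ ν (K := 0) (h'.translate hf hg hf' hg')
  have h2 := h _ _ (hf.integral_add ν) (hg.integral_add ν) (mono_integral hf hf' ν)
    (mono_integral hg hg' ν)
  linarith

lemma assoc_real (ν : Measure ℝ) [IsProbabilityMeasure ν] : Assoc ν := by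
  intro f g hf hg hf' hg'
  have key : 0 ≤ ∫ x, (∫ y, (f x - f y) * (g x - g y) ∂ν) ∂ν := by
    refine integral_nonneg fun x => integral_nonneg fun y => ?_
    rcases le_total x y with h | h
    · exact mul_nonneg_of_nonpos_of_nonpos (sub_nonpos.2 (hf' h)) (sub_nonpos.2 (hg' h))
    · exact mul_nonneg (sub_nonneg.2 (hf' h)) (sub_nonneg.2 (hg' h))
  have hfi := hf.integrable ν
  have hgi := hg.integrable ν
  have hfgi := (hf.mul hg).integrable ν
  have h1 : ∀ x, ∫ y, (f x - f y) * (g x - g y) ∂ν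
      = f x * g x - f x * (∫ y, g y ∂ν) - (∫ y, f y ∂ν) * g x + ∫ y, f y * g y ∂ν := by
    intro x
    have : ∀ y, (f x - f y) * (g x - g y) = f x * g x - f x * g y - f y * g x + f y * g y := by
      intro y; ring
    simp_rw [this]
    have i0 : Integrable (fun _ : ℝ => f x * g x) ν := integrable_const _
    have i1 : Integrable (fun y => f x * g y) ν := hgi.const_mul _
    have i2 : Integrable (fun y => f y * g x) ν := hfi.mul_const _
    have i3 : Integrable (fun y => f x * g x - f x * g y) ν := i0.sub i1
    have i4 : Integrable (fun y => f x * g x - f x * g y - f y * g x) ν := i3.sub i2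
    rw [integral_add i4 hfgi, integral_sub i3 i2, integral_sub i0 i1, integral_const_mul,
      integral_mul_const]
    simp [integral_const_mul]
  simp_rw [h1] at key
  have j1 : Integrable (fun x => f x * (∫ y, g y ∂ν)) ν := hfi.mul_const _
  have j2 : Integrable (fun x => (∫ y, f y ∂ν) * g x) ν := hgi.const_mul _
  have j3 : Integrable (fun x => f x * g x - f x * (∫ y, g y ∂ν)) ν := hfgi.sub j1
  have j4 : Integrable (fun x => f x * g x - f x * (∫ y, g y ∂ν) - (∫ y, f y ∂ν) * g x) ν :=
    j3.sub j2
  rw [integral_add j4 (integrable_const _), integral_sub j3 j2, integral_sub hfgi j1,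
    integral_const_mul, integral_mul_const] at key
  simp only [integral_const, probReal_univ, one_smul] at key
  unfold Cv
  linarith
end
end

section
open ProbabilityTheory Complex

section
variable {ι : Type*} [Fintype ι]

/-- characteristic function on `ι → ℝ` -/
noncomputable def CF (ν : Measure (ι → ℝ)) (t : ι → ℝ) : ℂ :=
  ∫ x, cexp (((t ⬝ᵥ x : ℝ) : ℂ) * I) ∂ν

lemma eq_of_CF {μ ν : Measure (ι → ℝ)} [IsFiniteMeasure μ] [IsFiniteMeasure ν]
    (h : ∀ t, CF μ t = CF ν t) : μ = ν := by
  have h2 : ∀ (ρ : Measure (ι → ℝ)) (t : EuclideanSpace ℝ ι),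
      charFun (ρ.map (WithLp.toLp 2)) t = CF ρ (WithLp.ofLp t) := by
    intro ρ t
    rw [charFun_apply, integral_map (by fun_prop) (by fun_prop), CF]
    simp [PiLp.inner_apply, dotProduct]
  have h1 : μ.map (WithLp.toLp 2 : (ι → ℝ) → EuclideanSpace ℝ ι)
      = ν.map (WithLp.toLp 2) := by
    apply Measure.ext_of_charFun
    ext t
    rw [h2, h2, h]
  exact (MeasurableEquiv.toLp 2 (ι → ℝ)).map_measurableEquiv_injective h1

lemma CF_conv (μ ν : Measure (ι → ℝ)) [IsProbabilityMeasure μ] [IsProbabilityMeasure ν]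
    (t : ι → ℝ) : CF (μ ∗ ν) t = CF μ t * CF ν t := by
  unfold CF Measure.conv
  rw [integral_map (by fun_prop) (by fun_prop), ← integral_prod_mul]
  congr 1
  ext p
  rw [← Complex.exp_add, dotProduct_add]
  push_cast
  ring_nf

lemma CF_map_lin {κ : Type*} [Fintype κ] (ν : Measure (κ → ℝ)) (B : Matrix ι κ ℝ) (t : ι → ℝ) :
    CF (ν.map (fun x => B *ᵥ x)) t = CF ν (Bᵀ *ᵥ t) := by
  unfold CF
  have hB : Continuous (fun x : κ → ℝ => B *ᵥ x) := by fun_prop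
  rw [integral_map hB.measurable.aemeasurable (by fun_prop)]
  simp_rw [dotProduct_mulVec, ← mulVec_transpose]

/-- the Gaussian characteristic function -/
def IsG (ν : Measure (ι → ℝ)) (m : ι → ℝ) (S : Matrix ι ι ℝ) : Prop :=
  ∀ t, CF ν t = cexp (((t ⬝ᵥ m : ℝ) : ℂ) * I - ((t ⬝ᵥ S *ᵥ t : ℝ) : ℂ) / 2)

lemma IsG.eq {μ ν : Measure (ι → ℝ)} [IsFiniteMeasure μ] [IsFiniteMeasure ν]
    {m : ι → ℝ} {S : Matrix ι ι ℝ} (h : IsG μ m S) (h' : IsG ν m S) : μ = ν :=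
  eq_of_CF fun t => by rw [h t, h' t]

lemma IsG.conv {μ ν : Measure (ι → ℝ)} [IsProbabilityMeasure μ] [IsProbabilityMeasure ν]
    {m m' : ι → ℝ} {S S' : Matrix ι ι ℝ} (h : IsG μ m S) (h' : IsG ν m' S') :
    IsG (μ ∗ ν) (m + m') (S + S') := by
  intro t
  rw [CF_conv, h t, h' t, ← Complex.exp_add, dotProduct_add, add_mulVec, dotProduct_add]
  push_cast
  ring_nf

lemma IsG.map_smul {ν : Measure (ι → ℝ)} {S : Matrix ι ι ℝ} (h : IsG ν 0 S) (c : ℝ) :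
    IsG (ν.map (fun x => c • x)) 0 ((c ^ 2) • S) := by
  intro t
  unfold CF
  rw [integral_map (by fun_prop) (by fun_prop)]
  have := h (c • t)
  unfold CF at this
  simp only [dotProduct_smul, smul_dotProduct, mulVec_smul, smul_mulVec, dotProduct_zero] at this ⊢
  rw [this]
  simp only [smul_eq_mul]
  push_cast
  ring_nf

variable [DecidableEq ι]

/-- Gaussian law on `ι → ℝ` -/
noncomputable def N (m : ι → ℝ) (S : Matrix ι ι ℝ) : Measure (ι → ℝ) :=
  (multivariateGaussian (WithLp.toLp 2 m) S).map WithLp.ofLp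

instance (m : ι → ℝ) (S : Matrix ι ι ℝ) : IsProbabilityMeasure (N m S) :=
  Measure.isProbabilityMeasure_map (by fun_prop)

lemma isG_N (m : ι → ℝ) {S : Matrix ι ι ℝ} (hS : S.PosSemidef) : IsG (N m S) m S := by
  intro t
  unfold CF N
  rw [integral_map (by fun_prop) (by fun_prop)]
  have := charFun_multivariateGaussian (μ := WithLp.toLp 2 m) hS (WithLp.toLp 2 t)
  rw [charFun_apply] at this
  simp only [PiLp.inner_apply, RCLike.inner_apply, conj_trivial] at this
  have e : ∀ x y : ι → ℝ, x ⬝ᵥ y = ∑ i, y i * x i := fun x y => by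
    simp [dotProduct, mul_comm]
  have e' : ∀ x y : ι → ℝ, x ⬝ᵥ y = ∑ i, x i * y i := fun x y => rfl
  rw [e t m, ← this]
  simp_rw [e']

lemma memLp_N (S : Matrix ι ι ℝ) (p : ENNReal) (hp : p ≠ ⊤) : MemLp id p (N 0 S) := by
  unfold N
  have h := IsGaussian.memLp_id (multivariateGaussian (WithLp.toLp 2 (0 : ι → ℝ)) S) p hp
  rw [memLp_map_measure_iff (by fun_prop) (by fun_prop)]
  exact h.continuousLinearMap_comp (EuclideanSpace.equiv ι ℝ).toContinuousLinearMap

lemma integrable_norm_pow_N (S : Matrix ι ι ℝ) (n : ℕ) :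
    Integrable (fun x => ‖x‖ ^ n) (N 0 S) := by
  rcases Nat.eq_zero_or_pos n with rfl | hn
  · simp
  · exact (memLp_N S n (by simp)).integrable_norm_pow hn.ne'

lemma integrable_eval_N (S : Matrix ι ι ℝ) (i : ι) : Integrable (fun x => x i) (N 0 S) := by
  refine (integrable_norm_pow_N S 1).mono' (measurable_pi_apply i).aestronglyMeasurable (Filter.Eventually.of_forall fun x => ?_)
  simpa using norm_le_pi_norm x i

lemma integrable_eval2_N (S : Matrix ι ι ℝ) (i j : ι) :
    Integrable (fun x => x i * x j) (N 0 S) := by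
  refine (integrable_norm_pow_N S 2).mono' (by fun_prop) (Filter.Eventually.of_forall fun x => ?_)
  rw [norm_mul, sq]
  exact mul_le_mul (norm_le_pi_norm x i) (norm_le_pi_norm x j) (norm_nonneg _) (norm_nonneg _)

lemma integral_eval_N (S : Matrix ι ι ℝ) (i : ι) : ∫ x, x i ∂(N 0 S) = 0 := by
  unfold N
  rw [integral_map (by fun_prop) (Measurable.aestronglyMeasurable (by fun_prop))]
  have := (EuclideanSpace.proj (𝕜 := ℝ) i : EuclideanSpace ℝ ι →L[ℝ] ℝ).integral_comp_id_comm
    (IsGaussian.integrable_id (μ := multivariateGaussian (WithLp.toLp 2 (0 : ι → ℝ)) S))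
  simpa using this

lemma integral_eval2_N {S : Matrix ι ι ℝ} (hS : S.PosSemidef) (i j : ι) :
    ∫ x, x i * x j ∂(N 0 S) = S i j := by
  have h := covariance_eval_multivariateGaussian (μ := WithLp.toLp 2 (0 : ι → ℝ)) hS i j
  have h0 : ∀ i, ∫ x, x i ∂(multivariateGaussian (WithLp.toLp 2 (0 : ι → ℝ)) S) = 0 := by
    intro i
    have := integral_eval_N S i
    unfold N at this
    rwa [integral_map (by fun_prop) (Measurable.aestronglyMeasurable (by fun_prop))] at this
  unfold covariance at h
  simp only [h0, sub_zero] at h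
  unfold N
  rw [integral_map (by fun_prop) (by fun_prop), h]

lemma std_fourier (t : ι → ℝ) :
    ∫ y : ι → ℝ, ((Real.exp (-(1 / 2) * (y ⬝ᵥ y)) : ℝ) : ℂ) * cexp (((t ⬝ᵥ y : ℝ) : ℂ) * I)
      = ((Real.sqrt ((2 * Real.pi) ^ (Fintype.card ι)) : ℝ) : ℂ) *
        cexp (-((t ⬝ᵥ t : ℝ) : ℂ) / 2) := by
  have h := GaussianFourier.integral_cexp_neg_mul_sum_add (ι := ι) (b := (1 / 2 : ℂ))
    (by norm_num) (fun i => (t i : ℂ) * I)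
  have e1 : ∀ v : ι → ℝ, cexp (-(1 / 2 : ℂ) * ∑ i, (v i : ℂ) ^ 2 + ∑ i, (t i : ℂ) * I * v i)
      = ((Real.exp (-(1 / 2) * (v ⬝ᵥ v)) : ℝ) : ℂ) * cexp (((t ⬝ᵥ v : ℝ) : ℂ) * I) := by
    intro v
    rw [Complex.ofReal_exp, ← Complex.exp_add]
    simp only [dotProduct]
    push_cast
    rw [Finset.sum_mul]
    simp_rw [sq, mul_right_comm]
  simp_rw [e1] at h
  rw [h]
  congr 1
  · rw [Real.sqrt_eq_rpow, ← Real.rpow_natCast, ← Real.rpow_mul (by positivity),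
      Complex.ofReal_cpow (by positivity)]
    congr 1
    · push_cast; ring
    · push_cast; ring
  · congr 1
    simp only [dotProduct, mul_pow, I_sq]
    push_cast
    rw [← Finset.sum_mul]
    simp_rw [sq]
    ring

lemma integral_lin (B : Matrix ι ι ℝ) (hB : B.det ≠ 0) (F : (ι → ℝ) → ℂ) (hF : Continuous F) :
    ∫ x, F x = |B.det| • ∫ y, F (B *ᵥ y) := by
  have h := Real.map_matrix_volume_pi_eq_smul_volume_pi hB
  have h2 : ∫ x, F x ∂(Measure.map (toLin' B) volume) = ∫ y, F (B *ᵥ y) := by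
    rw [integral_map]
    · simp
    · exact (LinearMap.continuous_of_finiteDimensional _).measurable.aemeasurable
    · exact hF.aestronglyMeasurable
  rw [h, integral_smul_measure] at h2
  rw [← h2, smul_smul, ENNReal.toReal_ofReal (abs_nonneg _), ← abs_mul, mul_inv_cancel₀ hB]
  simp

open scoped MatrixOrder in
lemma exists_factor {S : Matrix ι ι ℝ} (hS : S.PosSemidef) : ∃ B : Matrix ι ι ℝ, S = B * Bᵀ := by
  have h := CFC.sqrt_mul_sqrt_self S hS.nonneg
  have h2 : (CFC.sqrt S)ᵀ = CFC.sqrt S := by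
    have := (CFC.sqrt_nonneg S).isSelfAdjoint.star_eq
    rwa [star_eq_conjTranspose, conjTranspose_eq_transpose_of_trivial] at this
  exact ⟨CFC.sqrt S, by rw [h2, h]⟩

lemma gaussDensity_nonneg (m : ι → ℝ) (S : Matrix ι ι ℝ) (x : ι → ℝ) : 0 ≤ gaussDensity m S x := by
  unfold gaussDensity; positivity

lemma continuous_gaussDensity (m : ι → ℝ) (S : Matrix ι ι ℝ) : Continuous (gaussDensity m S) := by
  unfold gaussDensity; fun_prop

lemma isG_density (m : ι → ℝ) {S : Matrix ι ι ℝ} (hS : S.PosDef) :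
    IsG (volume.withDensity fun x => ENNReal.ofReal (gaussDensity m S x)) m S := by
  intro t
  obtain ⟨B, rfl⟩ := exists_factor hS.posSemidef
  have hdet : B.det ≠ 0 := by
    have := hS.det_pos
    rw [det_mul, det_transpose] at this
    intro h; simp [h] at this
  have hu : IsUnit B.det := isUnit_iff_ne_zero.2 hdet
  unfold CF
  have hc := continuous_gaussDensity m (B * Bᵀ)
  rw [integral_withDensity_eq_integral_toReal_smul (by fun_prop) (by simp)]
  simp_rw [ENNReal.toReal_ofReal (gaussDensity_nonneg _ _ _)]
  rw [← integral_add_left_eq_self _ m, integral_lin B hdet _ (by fun_prop)]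
  have e : ∀ y : ι → ℝ, gaussDensity m (B * Bᵀ) (m + B *ᵥ y) •
        cexp (((t ⬝ᵥ (m + B *ᵥ y) : ℝ) : ℂ) * I)
      = (((Real.sqrt ((2 * Real.pi) ^ (Fintype.card ι)))⁻¹ * |B.det|⁻¹ : ℝ) : ℂ) *
        cexp (((t ⬝ᵥ m : ℝ) : ℂ) * I) *
        (((Real.exp (-(1 / 2) * (y ⬝ᵥ y)) : ℝ) : ℂ) *
          cexp ((((Bᵀ *ᵥ t) ⬝ᵥ y : ℝ) : ℂ) * I)) := by
    intro y
    have e1 : (B *ᵥ y) ⬝ᵥ (B * Bᵀ)⁻¹ *ᵥ (B *ᵥ y) = y ⬝ᵥ y := by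
      rw [Matrix.mul_inv_rev, mulVec_mulVec, Matrix.mul_assoc, nonsing_inv_mul _ hu, Matrix.mul_one,
        dotProduct_mulVec, ← mulVec_transpose, mulVec_mulVec, transpose_nonsing_inv,
        transpose_transpose, nonsing_inv_mul _ hu, one_mulVec]
    have e2 : Real.sqrt ((2 * Real.pi) ^ (Fintype.card ι) * (B * Bᵀ).det)
        = Real.sqrt ((2 * Real.pi) ^ (Fintype.card ι)) * |B.det| := by
      rw [Real.sqrt_mul (by positivity), det_mul, det_transpose, Real.sqrt_mul_self_eq_abs]
    unfold gaussDensity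
    rw [add_sub_cancel_left, e1, e2, dotProduct_add, dotProduct_mulVec, ← mulVec_transpose,
      mul_inv]
    push_cast
    rw [add_mul, Complex.exp_add, Complex.real_smul]
    push_cast
    ring
  simp_rw [e]
  rw [integral_const_mul, std_fourier]
  have h1 : (0 : ℝ) < Real.sqrt ((2 * Real.pi) ^ (Fintype.card ι)) := by positivity
  have h2 : 0 < |B.det| := abs_pos.2 hdet
  have e3 : (Bᵀ *ᵥ t) ⬝ᵥ (Bᵀ *ᵥ t) = t ⬝ᵥ (B * Bᵀ) *ᵥ t := by
    rw [← mulVec_mulVec, dotProduct_mulVec, mulVec_transpose, dotProduct_mulVec,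
      ← dotProduct_mulVec (t ᵥ* B), mulVec_transpose]
  rw [e3, sub_eq_add_neg, Complex.exp_add, Complex.real_smul, ← neg_div]
  have h1' : ((Real.sqrt ((2 * Real.pi) ^ (Fintype.card ι)) : ℝ) : ℂ) ≠ 0 := by
    exact_mod_cast h1.ne'
  have h2' : ((|B.det| : ℝ) : ℂ) ≠ 0 := by exact_mod_cast h2.ne'
  rw [Complex.ofReal_mul, Complex.ofReal_inv, Complex.ofReal_inv]
  generalize ((Real.sqrt ((2 * Real.pi) ^ (Fintype.card ι)) : ℝ) : ℂ) = u at *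
  generalize ((|B.det| : ℝ) : ℂ) = w at *
  field_simp

lemma N_one_eq : N 0 (1 : Matrix ι ι ℝ)
    = volume.withDensity fun x => ENNReal.ofReal (gaussDensity 0 1 x) := by
  have h := isG_density (0 : ι → ℝ) (PosDef.one (n := ι) (R := ℝ))
  have hf : Integrable (gaussDensity (0 : ι → ℝ) 1) := by
    have := GaussianFourier.integrable_cexp_neg_mul_sum_add (ι := ι) (b := (1 / 2 : ℂ))
      (by norm_num) (fun i => 0)
    have h2 := this.norm
    unfold gaussDensity
    refine Integrable.const_mul ?_ _
    refine h2.congr (Filter.Eventually.of_forall fun x => ?_)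
    simp only [Complex.norm_exp]
    simp only [zero_mul, Finset.sum_const_zero, add_zero, sub_zero, inv_one, one_mulVec,
      dotProduct]
    congr 1
    have : (-(1 / 2 : ℂ) * ∑ i, (x i : ℂ) ^ 2) = ((-(1 / 2) * ∑ i, x i * x i : ℝ) : ℂ) := by
      push_cast; simp_rw [sq]
    rw [this, Complex.ofReal_re]
  have := isFiniteMeasure_withDensity_ofReal hf.2
  exact (isG_N 0 PosSemidef.one).eq h

end
end

section
section
variable {ι : Type*} [Fintype ι]

/-- class of functions with a uniform second order Taylor bound and nonnegative gradient -/
def Nice (C : ℝ) (h : (ι → ℝ) → ℝ) : Prop :=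
  BM h ∧ ∃ v : (ι → ℝ) → ι → ℝ, Measurable v ∧ (∀ x i, 0 ≤ v x i ∧ v x i ≤ C) ∧
    ∀ x ξ, |h (x + ξ) - h x - v x ⬝ᵥ ξ| ≤ C * ‖ξ‖ ^ 2

lemma Nice.translate {C : ℝ} {h : (ι → ℝ) → ℝ} (hh : Nice C h) (a : ι → ℝ) :
    Nice C (fun x => h (a + x)) := by
  obtain ⟨hb, v, hv, hv', ht⟩ := hh
  refine ⟨hb.comp (measurable_const_add a), fun x => v (a + x), hv.comp (measurable_const_add a),
    fun x i => hv' _ i, fun x ξ => ?_⟩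
  have := ht (a + x) ξ
  rwa [add_assoc] at this

lemma Nice.avg {C : ℝ} {h : (ι → ℝ) → ℝ} (hh : Nice C h) (ν : Measure (ι → ℝ))
    [IsProbabilityMeasure ν] : Nice C (fun x => ∫ y, h (x + y) ∂ν) := by
  obtain ⟨hb, v, hv, hv', ht⟩ := hh
  have hvb : ∀ i, BM (fun x => v x i) := fun i =>
    ⟨(measurable_pi_apply i).comp hv, C, fun x => by
      rw [abs_of_nonneg (hv' x i).1]; exact (hv' x i).2⟩
  have hvi : ∀ x i, Integrable (fun y => v (x + y) i) ν := fun x i =>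
    ((hvb i).comp (measurable_const_add x)).integrable ν
  have hhi : ∀ x, Integrable (fun y => h (x + y)) ν := fun x =>
    (hb.comp (measurable_const_add x)).integrable ν
  refine ⟨hb.integral_add ν, fun x i => ∫ y, v (x + y) i ∂ν, ?_, fun x i => ⟨?_, ?_⟩, ?_⟩
  · exact measurable_pi_lambda _ fun i => ((hvb i).integral_add ν).1
  · exact integral_nonneg fun y => (hv' _ i).1
  · have := integral_mono (hvi x i) (integrable_const C) fun y => (hv' _ i).2
    simpa using this
  · intro x ξ
    have e : (fun i => ∫ y, v (x + y) i ∂ν) ⬝ᵥ ξ = ∫ y, v (x + y) ⬝ᵥ ξ ∂ν := by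
      simp only [dotProduct]
      rw [integral_finsetSum _ fun i _ => (hvi x i).mul_const _]
      simp_rw [integral_mul_const]
    have i3 : Integrable (fun y => v (x + y) ⬝ᵥ ξ) ν := by
      simp only [dotProduct]
      exact integrable_finsetSum _ fun i _ => (hvi x i).mul_const _
    have i2 : Integrable (fun y => h (x + ξ + y) - h (x + y)) ν := (hhi _).sub (hhi _)
    rw [e, ← integral_sub (hhi _) (hhi _), ← integral_sub i2 i3]
    refine abs_integral_le_of_bound ν fun y => ?_
    have := ht (x + y) ξ
    rwa [add_right_comm] at this

variable [DecidableEq ι]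

lemma abs_dot_le (v x : ι → ℝ) : |v ⬝ᵥ x| ≤ Fintype.card ι * (‖v‖ * ‖x‖) := by
  unfold dotProduct
  refine (Finset.abs_sum_le_sum_abs _ _).trans ?_
  refine (Finset.sum_le_card_nsmul _ _ (‖v‖ * ‖x‖) fun i _ => ?_).trans (by simp)
  rw [abs_mul]
  exact mul_le_mul (norm_le_pi_norm v i) (norm_le_pi_norm x i) (abs_nonneg _) (norm_nonneg _)

lemma integrable_dot (S : Matrix ι ι ℝ) (v : ι → ℝ) : Integrable (fun x => v ⬝ᵥ x) (N 0 S) := by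
  simp only [dotProduct]
  exact integrable_finsetSum _ fun i _ => (integrable_eval_N S i).const_mul _

lemma integral_dot (S : Matrix ι ι ℝ) (v : ι → ℝ) : ∫ x, v ⬝ᵥ x ∂(N 0 S) = 0 := by
  simp only [dotProduct]
  rw [integral_finsetSum _ fun i _ => (integrable_eval_N S i).const_mul _]
  simp [integral_const_mul, integral_eval_N]

lemma dot_mul_dot (v w x : ι → ℝ) :
    (v ⬝ᵥ x) * (w ⬝ᵥ x) = ∑ i, ∑ j, v i * w j * (x i * x j) := by
  simp only [dotProduct]
  rw [Finset.sum_mul_sum]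
  refine Finset.sum_congr rfl fun i _ => Finset.sum_congr rfl fun j _ => by ring

lemma integrable_dot2 (S : Matrix ι ι ℝ) (v w : ι → ℝ) :
    Integrable (fun x => (v ⬝ᵥ x) * (w ⬝ᵥ x)) (N 0 S) := by
  simp_rw [dot_mul_dot]
  exact integrable_finsetSum _ fun i _ => integrable_finsetSum _ fun j _ =>
    (integrable_eval2_N S i j).const_mul _

lemma integral_dot2_nonneg {S : Matrix ι ι ℝ} (hS : S.PosSemidef) (hpos : ∀ i j, 0 ≤ S i j)
    (v w : ι → ℝ) (hv : ∀ i, 0 ≤ v i) (hw : ∀ i, 0 ≤ w i) :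
    0 ≤ ∫ x, (v ⬝ᵥ x) * (w ⬝ᵥ x) ∂(N 0 S) := by
  simp_rw [dot_mul_dot]
  rw [integral_finsetSum _ fun i _ => integrable_finsetSum _ fun j _ =>
    (integrable_eval2_N S i j).const_mul _]
  refine Finset.sum_nonneg fun i _ => ?_
  rw [integral_finsetSum _ fun j _ => (integrable_eval2_N S i j).const_mul _]
  refine Finset.sum_nonneg fun j _ => ?_
  rw [integral_const_mul, integral_eval2_N hS]
  exact mul_nonneg (mul_nonneg (hv i) (hw j)) (hpos i j)

lemma Cv_sub_const {α : Type*} [MeasurableSpace α] (ν : Measure α) [IsProbabilityMeasure ν]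
    {f g : α → ℝ} (hf : BM f) (hg : BM g) (a b : ℝ) :
    Cv ν f g = Cv ν (fun x => f x - a) (fun x => g x - b) := by
  have hfi := hf.integrable ν
  have hgi := hg.integrable ν
  have hfgi := (hf.mul hg).integrable ν
  unfold Cv
  have e : ∀ x, (f x - a) * (g x - b) = f x * g x - f x * b - a * g x + a * b := by
    intro x; ring
  simp_rw [e]
  have j1 : Integrable (fun x => f x * b) ν := hfi.mul_const _
  have j2 : Integrable (fun x => a * g x) ν := hgi.const_mul _
  have j3 : Integrable (fun x => f x * g x - f x * b) ν := hfgi.sub j1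
  have j4 : Integrable (fun x => f x * g x - f x * b - a * g x) ν := j3.sub j2
  rw [integral_add j4 (integrable_const _), integral_sub j3 j2, integral_sub hfgi j1,
    integral_const_mul, integral_mul_const, integral_sub hfi (integrable_const _),
    integral_sub hgi (integrable_const _)]
  simp only [integral_const, probReal_univ, one_smul]
  ring

lemma small_step {S : Matrix ι ι ℝ} (hS : S.PosSemidef) (hpos : ∀ i j, 0 ≤ S i j)
    {C : ℝ} (hC : 0 ≤ C) : ∃ K : ℝ, 0 ≤ K ∧ ∀ c : ℝ, 0 ≤ c → c ≤ 1 → ∀ h k : (ι → ℝ) → ℝ,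
      Nice C h → Nice C k → -(K * c ^ 3) ≤ Cv ((N 0 S).map (fun x => c • x)) h k := by
  set n : ℝ := (Fintype.card ι : ℝ) with hn
  have hn0 : 0 ≤ n := by positivity
  set M : ℕ → ℝ := fun p => ∫ x, ‖x‖ ^ p ∂(N 0 S) with hM
  have hM0 : ∀ p, 0 ≤ M p := fun p => integral_nonneg fun x => by positivity
  refine ⟨2 * n * C ^ 2 * M 3 + C ^ 2 * M 4 + C ^ 2 * M 2 ^ 2, ?_, ?_⟩
  · have := hM0 3; have := hM0 4; positivity
  intro c hc hc1 h k hh hk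
  obtain ⟨hb, v, -, hv, ht⟩ := hh
  obtain ⟨kb, w, -, hw, kt⟩ := hk
  have hsm : Measurable (fun x : ι → ℝ => c • x) := by fun_prop
  rw [Cv_map hb kb _ hsm, Cv_sub_const _ (hb.comp hsm) (kb.comp hsm) (h 0) (k 0)]
  have hvn : ‖v 0‖ ≤ C := (pi_norm_le_iff_of_nonneg hC).2 fun i => by
    rw [Real.norm_eq_abs, abs_of_nonneg (hv 0 i).1]; exact (hv 0 i).2
  have hwn : ‖w 0‖ ≤ C := (pi_norm_le_iff_of_nonneg hC).2 fun i => by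
    rw [Real.norm_eq_abs, abs_of_nonneg (hw 0 i).1]; exact (hw 0 i).2
  have aux : ∀ u : ι → ℝ, ‖u‖ ≤ C → ∀ x, |u ⬝ᵥ x| ≤ n * C * ‖x‖ := by
    intro u hu x
    refine (abs_dot_le u x).trans ?_
    rw [mul_assoc]
    gcongr
  have hr : ∀ x, |h (c • x) - h 0 - c * (v 0 ⬝ᵥ x)| ≤ C * c ^ 2 * ‖x‖ ^ 2 := by
    intro x
    have := ht 0 (c • x)
    rw [zero_add, dotProduct_smul, norm_smul, Real.norm_eq_abs, abs_of_nonneg hc, smul_eq_mul,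
      mul_pow, ← mul_assoc] at this
    exact this
  have kr : ∀ x, |k (c • x) - k 0 - c * (w 0 ⬝ᵥ x)| ≤ C * c ^ 2 * ‖x‖ ^ 2 := by
    intro x
    have := kt 0 (c • x)
    rw [zero_add, dotProduct_smul, norm_smul, Real.norm_eq_abs, abs_of_nonneg hc, smul_eq_mul,
      mul_pow, ← mul_assoc] at this
    exact this
  have hpi : ∀ (f : (ι → ℝ) → ℝ), BM f → Integrable (fun x => f (c • x) - f 0) (N 0 S) :=
    fun f hf => ((hf.comp hsm).integrable _).sub (integrable_const _)
  have mean : ∀ (f : (ι → ℝ) → ℝ) (u : ι → ℝ), BM f →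
      (∀ x, |f (c • x) - f 0 - c * (u ⬝ᵥ x)| ≤ C * c ^ 2 * ‖x‖ ^ 2) →
      |∫ x, (f (c • x) - f 0) ∂(N 0 S)| ≤ C * c ^ 2 * M 2 := by
    intro f u hf hfu
    have e : ∫ x, (f (c • x) - f 0) ∂(N 0 S) = ∫ x, (f (c • x) - f 0 - c * (u ⬝ᵥ x)) ∂(N 0 S) := by
      rw [integral_sub (hpi f hf) ((integrable_dot S u).const_mul c), integral_const_mul,
        integral_dot]
      simp
    rw [e]
    have := norm_integral_le_of_norm_le (μ := N 0 S)
      (f := fun x => f (c • x) - f 0 - c * (u ⬝ᵥ x))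
      ((integrable_norm_pow_N S 2).const_mul (C * c ^ 2)) (Filter.Eventually.of_forall hfu)
    rwa [integral_const_mul] at this
  have hm := mean h (v 0) hb hr
  have km := mean k (w 0) kb kr
  have main : c ^ 2 * (∫ x, (v 0 ⬝ᵥ x) * (w 0 ⬝ᵥ x) ∂(N 0 S))
      - (2 * n * C ^ 2 * c ^ 3 * M 3 + C ^ 2 * c ^ 3 * M 4)
      ≤ ∫ x, (h (c • x) - h 0) * (k (c • x) - k 0) ∂(N 0 S) := by
    have i1 : Integrable (fun x => c ^ 2 * ((v 0 ⬝ᵥ x) * (w 0 ⬝ᵥ x))) (N 0 S) :=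
      (integrable_dot2 S _ _).const_mul _
    have i2 : Integrable (fun x => 2 * n * C ^ 2 * c ^ 3 * ‖x‖ ^ 3) (N 0 S) :=
      (integrable_norm_pow_N S 3).const_mul _
    have i3 : Integrable (fun x => C ^ 2 * c ^ 3 * ‖x‖ ^ 4) (N 0 S) :=
      (integrable_norm_pow_N S 4).const_mul _
    have i4 : Integrable (fun x => 2 * n * C ^ 2 * c ^ 3 * ‖x‖ ^ 3 + C ^ 2 * c ^ 3 * ‖x‖ ^ 4)
      (N 0 S) := i2.add i3
    have bm : ∀ f : (ι → ℝ) → ℝ, BM f → BM (fun x => f (c • x) - f 0) := by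
      rintro f ⟨hf, D, hD⟩
      refine ⟨(hf.comp hsm).sub_const _, D + D, fun x => ?_⟩
      exact (abs_sub _ _).trans (add_le_add (hD _) (hD _))
    have i5 : Integrable (fun x => (h (c • x) - h 0) * (k (c • x) - k 0)) (N 0 S) :=
      ((bm h hb).mul (bm k kb)).integrable _
    rw [← integral_const_mul, ← integral_const_mul, ← integral_const_mul, ← integral_add i2 i3,
      ← integral_sub i1 i4]
    refine integral_mono (i1.sub i4) i5 fun x => ?_
    have ha := aux _ hvn x
    have hb' := aux _ hwn x
    have h1 := hr x
    have h2 := kr x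
    simp only
    set a := v 0 ⬝ᵥ x
    set b := w 0 ⬝ᵥ x
    set r := h (c • x) - h 0 - c * a with hrdef
    set s := k (c • x) - k 0 - c * b with hsdef
    have e1 : h (c • x) - h 0 = c * a + r := by rw [hrdef]; ring
    have e2 : k (c • x) - k 0 = c * b + s := by rw [hsdef]; ring
    rw [e1, e2]
    have b1 : |a * s| ≤ (n * C * ‖x‖) * (C * c ^ 2 * ‖x‖ ^ 2) := by
      rw [abs_mul]; exact mul_le_mul ha h2 (abs_nonneg _) (by positivity)
    have b2 : |b * r| ≤ (n * C * ‖x‖) * (C * c ^ 2 * ‖x‖ ^ 2) := by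
      rw [abs_mul]; exact mul_le_mul hb' h1 (abs_nonneg _) (by positivity)
    have b3 : |r * s| ≤ (C * c ^ 2 * ‖x‖ ^ 2) * (C * c ^ 2 * ‖x‖ ^ 2) := by
      rw [abs_mul]; exact mul_le_mul h1 h2 (abs_nonneg _) (by positivity)
    have b4 : (C * c ^ 2 * ‖x‖ ^ 2) * (C * c ^ 2 * ‖x‖ ^ 2) ≤ C ^ 2 * c ^ 3 * ‖x‖ ^ 4 := by
      have : c ^ 4 ≤ c ^ 3 := pow_le_pow_of_le_one hc hc1 (by norm_num)
      calc _ = C ^ 2 * c ^ 4 * ‖x‖ ^ 4 := by ring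
        _ ≤ _ := by gcongr
    have c1 := mul_le_mul_of_nonneg_left (neg_le_of_abs_le b1) hc
    have c2 := mul_le_mul_of_nonneg_left (neg_le_of_abs_le b2) hc
    have c3 := neg_le_of_abs_le b3
    nlinarith [c1, c2, c3, b4]
  have hnn := mul_nonneg (sq_nonneg c) (integral_dot2_nonneg hS hpos (v 0) (w 0)
    (fun i => (hv 0 i).1) (fun i => (hw 0 i).1))
  have hprod : (∫ x, (h (c • x) - h 0) ∂(N 0 S)) * (∫ x, (k (c • x) - k 0) ∂(N 0 S))
      ≤ C ^ 2 * c ^ 3 * M 2 ^ 2 := by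
    refine (le_abs_self _).trans ?_
    rw [abs_mul]
    refine (mul_le_mul hm km (abs_nonneg _) (by have := hM0 2; positivity)).trans ?_
    have : c ^ 4 ≤ c ^ 3 := pow_le_pow_of_le_one hc hc1 (by norm_num)
    calc _ = C ^ 2 * c ^ 4 * M 2 ^ 2 := by ring
      _ ≤ _ := by gcongr
  unfold Cv
  nlinarith [main, hnn, hprod]

lemma Cv_nice {S : Matrix ι ι ℝ} (hS : S.PosSemidef) (hpos : ∀ i j, 0 ≤ S i j)
    {C : ℝ} (hC : 0 ≤ C) (h k : (ι → ℝ) → ℝ) (hh : Nice C h) (hk : Nice C k) :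
    0 ≤ Cv (N 0 S) h k := by
  obtain ⟨K, hK, hstep⟩ := small_step hS hpos hC
  set σ : ℝ := Real.sqrt (1 / 2) with hσ
  have hσ2 : σ ^ 2 = 1 / 2 := Real.sq_sqrt (by norm_num)
  have hσ0 : 0 ≤ σ := Real.sqrt_nonneg _
  have hσ1 : σ < 1 := by nlinarith
  have hprob : ∀ c : ℝ, IsProbabilityMeasure ((N 0 S).map (fun x => c • x)) := fun c =>
    Measure.isProbabilityMeasure_map (by fun_prop)
  have hconv : ∀ c : ℝ, (N 0 S).map (fun x => c • x)
      = ((N 0 S).map (fun x => (σ * c) • x)) ∗ ((N 0 S).map (fun x => (σ * c) • x)) := by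
    intro c
    have h1 := (isG_N 0 hS).map_smul c
    have h2 := ((isG_N 0 hS).map_smul (σ * c)).conv ((isG_N 0 hS).map_smul (σ * c))
    rw [← add_smul, add_zero] at h2
    have e : (σ * c) ^ 2 + (σ * c) ^ 2 = c ^ 2 := by rw [mul_pow, hσ2]; ring
    rw [e] at h2
    exact h1.eq h2
  have ind : ∀ m : ℕ, ∀ c : ℝ, 0 ≤ c → c ≤ 1 → ∀ h k : (ι → ℝ) → ℝ, Nice C h → Nice C k →
      -(K * 2 ^ m * (σ ^ m * c) ^ 3) ≤ Cv ((N 0 S).map (fun x => c • x)) h k := by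
    intro m
    induction m with
    | zero => intro c hc hc1 h k hh hk; simpa using hstep c hc hc1 h k hh hk
    | succ m ih =>
      intro c hc hc1 h k hh hk
      have hc' : 0 ≤ σ * c := by positivity
      have hc1' : σ * c ≤ 1 := by nlinarith
      have := Cv_conv hh.1 hk.1 ((N 0 S).map (fun x => (σ * c) • x))
        ((N 0 S).map (fun x => (σ * c) • x)) (K := -(K * 2 ^ m * (σ ^ m * (σ * c)) ^ 3))
        (fun x => ih _ hc' hc1' _ _ (hh.translate x) (hk.translate x))
      have h2 := ih _ hc' hc1' _ _ (hh.avg ((N 0 S).map (fun x => (σ * c) • x)))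
        (hk.avg ((N 0 S).map (fun x => (σ * c) • x)))
      rw [hconv c]
      have e : K * 2 ^ (m + 1) * (σ ^ (m + 1) * c) ^ 3 =
        2 * (K * 2 ^ m * (σ ^ m * (σ * c)) ^ 3) := by ring
      rw [e]
      linarith
  have lim : ∀ m : ℕ, -(K * σ ^ m) ≤ Cv (N 0 S) h k := by
    intro m
    have := ind m 1 zero_le_one le_rfl h k hh hk
    simp only [one_smul, mul_one, Measure.map_id'] at this
    have e : K * 2 ^ m * (σ ^ m) ^ 3 = K * σ ^ m := by
      have : (2 : ℝ) ^ m * (σ ^ m) ^ 3 = (2 * σ ^ 2) ^ m * σ ^ m := by rw [mul_pow]; ring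
      rw [mul_assoc, this, hσ2]; norm_num
    rwa [e] at this
  have t := ((tendsto_pow_atTop_nhds_zero_of_lt_one hσ0 hσ1).const_mul K).neg
  simp only [mul_zero, neg_zero] at t
  exact le_of_tendsto' t lim
end
end

section
section
variable {ι : Type*} [Fintype ι] [DecidableEq ι]

lemma integrable_exp_N (t : ℝ) :
    Integrable (fun x => Real.exp (t * ‖x‖)) (N 0 (1 : Matrix ι ι ℝ)) := by
  have hG : ProbabilityTheory.IsGaussian (N 0 (1 : Matrix ι ι ℝ)) := by
    unfold N
    exact inferInstanceAs (ProbabilityTheory.IsGaussian (Measure.map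
      (EuclideanSpace.equiv ι ℝ).toContinuousLinearMap _))
  obtain ⟨C, hC, hi⟩ := ProbabilityTheory.IsGaussian.exists_integrable_exp_sq
    (N 0 (1 : Matrix ι ι ℝ))
  refine (hi.const_mul (Real.exp (t ^ 2 / (4 * C)))).mono'
    (Continuous.aestronglyMeasurable (by fun_prop)) (Filter.Eventually.of_forall fun x => ?_)
  rw [Real.norm_eq_abs, Real.abs_exp, ← Real.exp_add, Real.exp_le_exp]
  have : t ^ 2 / (4 * C) + C * ‖x‖ ^ 2 - t * ‖x‖ = (t - 2 * C * ‖x‖) ^ 2 / (4 * C) := by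
    field_simp; ring
  have h2 : 0 ≤ (t - 2 * C * ‖x‖) ^ 2 / (4 * C) := by positivity
  linarith

/-- Cameron–Martin exponent -/
noncomputable def ex (η y : ι → ℝ) : ℝ := y ⬝ᵥ η - η ⬝ᵥ η / 2

lemma shift (F : (ι → ℝ) → ℝ) (η : ι → ℝ) :
    ∫ y, F (y + η) ∂(N 0 (1 : Matrix ι ι ℝ)) = ∫ y, F y * Real.exp (ex η y) ∂(N 0 1) := by
  have hc := continuous_gaussDensity (0 : ι → ℝ) 1
  rw [N_one_eq, integral_withDensity_eq_integral_toReal_smul (by fun_prop) (by simp),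
    integral_withDensity_eq_integral_toReal_smul (by fun_prop) (by simp)]
  simp_rw [ENNReal.toReal_ofReal (gaussDensity_nonneg _ _ _)]
  rw [← integral_sub_right_eq_self _ η]
  congr 1
  ext y
  have e : gaussDensity 0 1 (y - η) = gaussDensity 0 1 y * Real.exp (ex η y) := by
    unfold gaussDensity ex
    rw [mul_assoc, ← Real.exp_add]
    simp only [sub_zero, inv_one, one_mulVec, sub_dotProduct, dotProduct_sub]
    rw [dotProduct_comm η y]
    ring_nf
  rw [e, sub_add_cancel, smul_eq_mul, smul_eq_mul]
  ring

lemma exp_taylor (a : ℝ) : |Real.exp a - 1 - a| ≤ a ^ 2 * Real.exp |a| := by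
  have := Complex.norm_exp_sub_sum_le_norm_mul_exp (a : ℂ) 2
  simp only [Finset.sum_range_succ, Finset.sum_range_zero, zero_add, pow_zero, Nat.factorial,
    pow_one, Nat.cast_one, div_one, Complex.norm_real, Real.norm_eq_abs, mul_one] at this
  rw [← sub_sub] at this
  rw [sq_abs] at this
  exact_mod_cast this

lemma continuous_ex (η : ι → ℝ) : Continuous (ex η) := by unfold ex; fun_prop

lemma integrable_exp_ex (η : ι → ℝ) :
    Integrable (fun y => Real.exp (ex η y)) (N 0 (1 : Matrix ι ι ℝ)) := by
  refine (integrable_exp_N (ι := ι) (Fintype.card ι * ‖η‖)).mono'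
    (Continuous.aestronglyMeasurable (by have := continuous_ex η; fun_prop))
    (Filter.Eventually.of_forall fun y => ?_)
  rw [Real.norm_eq_abs, Real.abs_exp, Real.exp_le_exp]
  have h1 := (abs_le.1 (abs_dot_le y η)).2
  have h2 : 0 ≤ η ⬝ᵥ η := Finset.sum_nonneg fun i _ => mul_self_nonneg _
  unfold ex
  nlinarith

/-- remainder function -/
noncomputable def rem (η y : ι → ℝ) : ℝ := Real.exp (ex η y) - 1 - y ⬝ᵥ η

lemma integrable_rem (η : ι → ℝ) : Integrable (rem η) (N 0 (1 : Matrix ι ι ℝ)) := by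
  unfold rem
  refine ((integrable_exp_ex η).sub (integrable_const _)).sub ?_
  simp_rw [dotProduct_comm _ η]
  exact integrable_dot _ _

lemma rem_bound : ∃ K : ℝ, 0 ≤ K ∧ ∀ η : ι → ℝ,
    ∫ y, |rem η y| ∂(N 0 (1 : Matrix ι ι ℝ)) ≤ K * ‖η‖ ^ 2 := by
  set n : ℝ := (Fintype.card ι : ℝ) with hn
  have hn0 : 0 ≤ n := by positivity
  set γ := N 0 (1 : Matrix ι ι ℝ) with hγ
  set J : ℝ := ∫ y, Real.exp ((n + 2) * (‖y‖ + 1)) ∂γ with hJ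
  set M : ℝ := ∫ y, ‖y‖ ∂γ with hM
  have hJ0 : 0 ≤ J := integral_nonneg fun y => by positivity
  have hM0 : 0 ≤ M := integral_nonneg fun y => by positivity
  have iJ : Integrable (fun y => Real.exp ((n + 2) * (‖y‖ + 1))) γ := by
    simp_rw [mul_add, mul_one, Real.exp_add]
    exact (integrable_exp_N (n + 2)).mul_const _
  have iM : Integrable (fun y => ‖y‖) γ := by
    simpa using integrable_norm_pow_N (1 : Matrix ι ι ℝ) 1
  refine ⟨n ^ 2 * J + n + (2 + n * M), by positivity, fun η => ?_⟩
  rcases le_total ‖η‖ 1 with h | h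
  · have pt : ∀ y, |rem η y| ≤ (n ^ 2 * Real.exp ((n + 2) * (‖y‖ + 1)) + n) * ‖η‖ ^ 2 := by
      intro y
      have hd := abs_dot_le y η
      have he := abs_dot_le η η
      have h2 : 0 ≤ η ⬝ᵥ η := Finset.sum_nonneg fun i _ => mul_self_nonneg _
      rw [abs_of_nonneg h2] at he
      rw [← hn] at hd he
      set a := ex η y with ha
      have e0 : rem η y = (Real.exp a - 1 - a) + (- (η ⬝ᵥ η) / 2) := by
        unfold rem; rw [ha]; unfold ex; ring
      have ha1 : |a| ≤ n * (‖y‖ + 1) * ‖η‖ := by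
        have : |a| ≤ |y ⬝ᵥ η| + η ⬝ᵥ η := by
          rw [ha]; unfold ex
          refine (abs_sub _ _).trans ?_
          rw [abs_of_nonneg (by positivity : 0 ≤ η ⬝ᵥ η / 2)]
          linarith
        have h3 : n * (‖η‖ * ‖η‖) ≤ n * ‖η‖ := by
          gcongr; nlinarith [norm_nonneg η]
        nlinarith
      have ha2 : |a| ≤ n * (‖y‖ + 1) := by
        refine ha1.trans ?_
        exact mul_le_of_le_one_right (by positivity) h
      have ha3 : a ^ 2 ≤ n ^ 2 * (‖y‖ + 1) ^ 2 * ‖η‖ ^ 2 := by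
        rw [← sq_abs, ← mul_pow, ← mul_pow]
        exact pow_le_pow_left₀ (abs_nonneg _) ha1 2
      have h4 : (‖y‖ + 1) ^ 2 ≤ Real.exp (2 * (‖y‖ + 1)) := by
        have : ‖y‖ + 1 ≤ Real.exp (‖y‖ + 1) := by
          have := Real.add_one_le_exp (‖y‖ + 1); linarith
        calc (‖y‖ + 1) ^ 2 ≤ (Real.exp (‖y‖ + 1)) ^ 2 := pow_le_pow_left₀ (by positivity) this 2
          _ = _ := by rw [← Real.exp_nat_mul]; norm_num
      have h5 : |Real.exp a - 1 - a| ≤ n ^ 2 * Real.exp ((n + 2) * (‖y‖ + 1)) * ‖η‖ ^ 2 := by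
        calc _ ≤ a ^ 2 * Real.exp |a| := exp_taylor a
          _ ≤ (n ^ 2 * (‖y‖ + 1) ^ 2 * ‖η‖ ^ 2) * Real.exp (n * (‖y‖ + 1)) := by gcongr
          _ ≤ (n ^ 2 * Real.exp (2 * (‖y‖ + 1)) * ‖η‖ ^ 2) * Real.exp (n * (‖y‖ + 1)) := by gcongr
          _ = n ^ 2 * (Real.exp (n * (‖y‖ + 1)) * Real.exp (2 * (‖y‖ + 1))) * ‖η‖ ^ 2 := by ring
          _ = _ := by rw [← Real.exp_add, ← add_mul]
      rw [e0]
      refine (abs_add_le _ _).trans ?_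
      have h6 : |-(η ⬝ᵥ η) / 2| ≤ n * ‖η‖ ^ 2 := by
        rw [neg_div, abs_neg, abs_of_nonneg (by positivity)]
        nlinarith
      rw [add_mul]
      exact add_le_add h5 h6
    have := integral_mono (integrable_rem η).abs
      (((iJ.const_mul (n ^ 2)).add (integrable_const n)).mul_const (‖η‖ ^ 2)) pt
    have e : ∫ y, (n ^ 2 * Real.exp ((n + 2) * (‖y‖ + 1)) + n) * ‖η‖ ^ 2 ∂γ
        = (n ^ 2 * J + n) * ‖η‖ ^ 2 := by
      rw [integral_mul_const, integral_add (iJ.const_mul (n ^ 2)) (integrable_const n),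
        integral_const_mul, ← hJ]
      simp
    refine (this.trans e.le).trans ?_
    refine mul_le_mul_of_nonneg_right ?_ (by positivity)
    have : 0 ≤ n * M := by positivity
    linarith
  · have pt : ∀ y, |rem η y| ≤ Real.exp (ex η y) + 1 + n * ‖η‖ * ‖y‖ := by
      intro y
      unfold rem
      refine (abs_sub _ _).trans ?_
      refine add_le_add ((abs_sub _ _).trans (by simp)) ?_
      refine (abs_dot_le y η).trans (le_of_eq ?_)
      rw [← hn]; ring
    have i1 : Integrable (fun y => Real.exp (ex η y) + 1) γ :=
      (integrable_exp_ex η).add (integrable_const _)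
    have := integral_mono (integrable_rem η).abs (i1.add (iM.const_mul (n * ‖η‖))) pt
    have e1 : ∫ y, Real.exp (ex η y) ∂γ = 1 := by
      have := shift (fun _ => (1 : ℝ)) η
      simpa using this.symm
    have e : ∫ y, (Real.exp (ex η y) + 1 + n * ‖η‖ * ‖y‖) ∂γ = 1 + 1 + n * ‖η‖ * M := by
      rw [integral_add i1 (iM.const_mul (n * ‖η‖)), integral_add (integrable_exp_ex η)
        (integrable_const _), integral_const_mul, e1, ← hM]
      simp
    refine (this.trans e.le).trans ?_
    have h1 : ‖η‖ ≤ ‖η‖ ^ 2 := by nlinarith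
    have h2 : 1 ≤ ‖η‖ ^ 2 := by nlinarith
    have h3 : n * ‖η‖ * M ≤ n * M * ‖η‖ ^ 2 := by
      rw [mul_right_comm]; gcongr
    have h4 : 0 ≤ (n ^ 2 * J + n) * ‖η‖ ^ 2 := by positivity
    nlinarith

lemma nice_smooth {f : (ι → ℝ) → ℝ} (hf : BM f) (hm : Monotone f) {ε : ℝ} (hε : 0 < ε) :
    ∃ C0 : ℝ, 0 ≤ C0 ∧ ∀ C, C0 ≤ C →
      Nice C (fun x => ∫ y, f (x + y) ∂((N 0 (1 : Matrix ι ι ℝ)).map (fun x => ε • x))) := by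
  obtain ⟨K, hK, hrem⟩ := rem_bound (ι := ι)
  have hprob : IsProbabilityMeasure ((N 0 (1 : Matrix ι ι ℝ)).map (fun x => ε • x)) :=
    Measure.isProbabilityMeasure_map (by fun_prop)
  have hmono := mono_integral hf hm ((N 0 (1 : Matrix ι ι ℝ)).map (fun x => ε • x))
  have hbm := hf.integral_add ((N 0 (1 : Matrix ι ι ℝ)).map (fun x => ε • x))
  have hf2 := hf
  obtain ⟨hfm, D, hD⟩ := hf2
  have hD0 : 0 ≤ D := (abs_nonneg _).trans (hD 0)
  set γ := N 0 (1 : Matrix ι ι ℝ) with hγ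
  set h : (ι → ℝ) → ℝ := fun x => ∫ y, f (x + y) ∂(γ.map (fun x => ε • x)) with hh
  have hsm : Measurable (fun x : ι → ℝ => ε • x) := by fun_prop
  have he : ∀ x, h x = ∫ y, f (x + ε • y) ∂γ := fun x => by
    rw [hh]
    simp only
    rw [integral_map hsm.aemeasurable
      (hf.comp (measurable_const_add x)).1.aestronglyMeasurable]
  have hfx : ∀ x, BM (fun y : ι → ℝ => f (x + ε • y)) := fun x =>
    hf.comp (hsm.const_add x)
  have imul : ∀ x (g : (ι → ℝ) → ℝ), Integrable g γ →
      Integrable (fun y => f (x + ε • y) * g y) γ := by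
    intro x g hg
    exact hg.bdd_mul (hfx x).1.aestronglyMeasurable (Filter.Eventually.of_forall fun y => hD _)
  have bmul : ∀ x (g : (ι → ℝ) → ℝ), Integrable g γ →
      |∫ y, f (x + ε • y) * g y ∂γ| ≤ D * ∫ y, |g y| ∂γ := by
    intro x g hg
    have := norm_integral_le_of_norm_le (μ := γ) (f := fun y => f (x + ε • y) * g y)
      (hg.abs.const_mul D) (Filter.Eventually.of_forall fun y => by
        rw [norm_mul]; exact mul_le_mul_of_nonneg_right (hD _) (abs_nonneg _))
    rwa [integral_const_mul] at this
  set M : ℝ := ∫ y, ‖y‖ ∂γ with hM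
  have hM0 : 0 ≤ M := integral_nonneg fun y => by positivity
  have iM : Integrable (fun y => ‖y‖) γ := by
    simpa using integrable_norm_pow_N (1 : Matrix ι ι ℝ) 1
  set v : (ι → ℝ) → ι → ℝ := fun x i => ε⁻¹ * ∫ y, f (x + ε • y) * y i ∂γ with hv
  have taylor : ∀ x ξ, |h (x + ξ) - h x - v x ⬝ᵥ ξ| ≤ D * K * (ε⁻¹) ^ 2 * ‖ξ‖ ^ 2 := by
    intro x ξ
    set η := ε⁻¹ • ξ with hη
    have e1 : h (x + ξ) = ∫ y, f (x + ε • y) * Real.exp (ex η y) ∂γ := by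
      rw [he, ← shift (fun y => f (x + ε • y)) η]
      congr 1
      ext y
      rw [smul_add, hη, smul_smul, mul_inv_cancel₀ hε.ne', one_smul]
      congr 1
      abel
    have e2 : v x ⬝ᵥ ξ = ∫ y, f (x + ε • y) * (y ⬝ᵥ η) ∂γ := by
      simp only [dotProduct, Finset.mul_sum]
      rw [integral_finsetSum]
      · refine Finset.sum_congr rfl fun i _ => ?_
        simp_rw [← mul_assoc]
        rw [integral_mul_const, hv, hη]
        simp only [Pi.smul_apply, smul_eq_mul]
        ring
      · intro i _
        exact imul x _ ((integrable_eval_N 1 i).mul_const _)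
    have idot : Integrable (fun y => y ⬝ᵥ η) γ := by
      simp_rw [dotProduct_comm _ η]
      exact integrable_dot _ _
    have i1 := imul x _ (integrable_exp_ex η)
    have i2 := (hfx x).integrable γ
    have i3 := imul x _ idot
    have i12 : Integrable (fun y => f (x + ε • y) * Real.exp (ex η y) - f (x + ε • y)) γ :=
      i1.sub i2
    rw [e1, e2, he, ← integral_sub i1 i2, ← integral_sub i12 i3]
    have e3 : ∀ y, f (x + ε • y) * Real.exp (ex η y) - f (x + ε • y) - f (x + ε • y) * (y ⬝ᵥ η)
        = f (x + ε • y) * rem η y := by intro y; unfold rem; ring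
    simp_rw [e3]
    refine (bmul x _ (integrable_rem η)).trans ?_
    have h5 := mul_le_mul_of_nonneg_left (hrem η) hD0
    refine h5.trans (le_of_eq ?_)
    rw [hη, norm_smul, Real.norm_eq_abs, abs_of_pos (inv_pos.2 hε)]
    ring
  have vle : ∀ x i, v x i ≤ ε⁻¹ * (D * M) := by
    intro x i
    simp only [hv]
    have h1 := (le_abs_self _).trans (bmul x _ (integrable_eval_N 1 i))
    have h2 : ∫ y : ι → ℝ, |y i| ∂γ ≤ M :=
      integral_mono (integrable_eval_N 1 i).abs iM fun y => norm_le_pi_norm y i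
    have : 0 < ε⁻¹ := inv_pos.2 hε
    gcongr
    exact h1.trans (by gcongr)
  set A : ℝ := D * K * (ε⁻¹) ^ 2 with hA
  have hA0 : 0 ≤ A := by positivity
  have vnn : ∀ x i, 0 ≤ v x i := by
    intro x i
    have key : ∀ t : ℝ, 0 < t → -(A * t) ≤ v x i := by
      intro t ht
      have h1 := taylor x (Pi.single i t)
      have h2 : h x ≤ h (x + Pi.single i t) := by
        refine hmono ?_
        have : (0 : ι → ℝ) ≤ Pi.single i t := Pi.single_nonneg.2 ht.le
        simpa using this
      rw [dotProduct_single, Pi.norm_single, Real.norm_eq_abs, sq_abs] at h1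
      have h3 := (abs_le.1 h1).2
      have h4 : 0 ≤ t * (v x i + A * t) := by nlinarith
      have := nonneg_of_mul_nonneg_right h4 ht
      linarith
    have t0 : Filter.Tendsto (fun t : ℝ => -(A * t)) (nhdsWithin 0 (Set.Ioi 0)) (nhds 0) := by
      have : Continuous (fun t : ℝ => -(A * t)) := by fun_prop
      have := this.tendsto 0
      simp only [mul_zero, neg_zero] at this
      exact this.mono_left nhdsWithin_le_nhds
    exact le_of_tendsto t0 (Filter.eventually_of_mem self_mem_nhdsWithin key)
  refine ⟨A + ε⁻¹ * (D * M), by positivity, fun C hC => ⟨hbm, v, ?_, fun x i => ⟨vnn x i, ?_⟩, ?_⟩⟩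
  · refine measurable_pi_lambda _ fun i => ?_
    refine Measurable.const_mul ?_ _
    have : Measurable (fun p : (ι → ℝ) × (ι → ℝ) => f (p.1 + ε • p.2) * p.2 i) :=
      (hfm.comp (measurable_fst.add (measurable_snd.const_smul ε))).mul
        ((measurable_pi_apply i).comp measurable_snd)
    exact (this.stronglyMeasurable.integral_prod_right').measurable
  · exact (vle x i).trans (by linarith)
  · intro x ξ
    refine (taylor x ξ).trans ?_
    have : 0 ≤ ε⁻¹ * (D * M) := by positivity
    gcongr
    linarith
end
end

section
section
variable {ι : Type*} [Fintype ι]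

lemma assoc_dirac (m : ι → ℝ) : Assoc (Measure.dirac m) := by
  intro f g hf hg _ _
  simp [Cv]

lemma isG_dirac (m : ι → ℝ) : IsG (Measure.dirac m) m 0 := by
  intro t
  simp [CF]

variable [DecidableEq ι]

lemma isG_single (i : ι) :
    IsG ((ProbabilityTheory.gaussianReal 0 1).map (fun x => (Pi.single i x : ι → ℝ))) 0
      (diagonal (Pi.single i 1)) := by
  intro t
  have hm : Measurable (fun x => (Pi.single i x : ι → ℝ)) :=
    (continuous_single i).measurable
  unfold CF
  rw [integral_map hm.aemeasurable (by fun_prop)]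
  have h := ProbabilityTheory.charFun_gaussianReal (μ := 0) (v := 1) (t i)
  rw [charFun_apply_real] at h
  have e : t ⬝ᵥ diagonal (Pi.single i 1) *ᵥ t = t i ^ 2 := by
    rw [dotProduct, Finset.sum_eq_single i]
    · simp [mulVec_diagonal, sq]
    · intro j _ hj
      simp [mulVec_diagonal, hj]
    · simp
  rw [e]
  simp only [dotProduct_single, dotProduct_zero]
  push_cast
  refine h.trans ?_
  congr 1
  push_cast
  ring

lemma exists_assoc (s : Finset ι) : ∃ ν : Measure (ι → ℝ), IsProbabilityMeasure ν ∧ Assoc ν ∧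
    IsG ν 0 (diagonal (fun i => if i ∈ s then 1 else 0)) := by
  induction s using Finset.induction_on with
  | empty =>
    refine ⟨Measure.dirac 0, inferInstance, assoc_dirac 0, ?_⟩
    simpa using isG_dirac (0 : ι → ℝ)
  | insert a s ha ih =>
    obtain ⟨ν, h1, h2, h3⟩ := ih
    have hm : Measurable (fun x => (Pi.single a x : ι → ℝ)) := (continuous_single a).measurable
    have : IsProbabilityMeasure
        ((ProbabilityTheory.gaussianReal 0 1).map (fun x => (Pi.single a x : ι → ℝ))) :=
      Measure.isProbabilityMeasure_map hm.aemeasurable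
    refine ⟨ν ∗ (ProbabilityTheory.gaussianReal 0 1).map (fun x => (Pi.single a x : ι → ℝ)),
      inferInstance, h2.conv ((assoc_real (ProbabilityTheory.gaussianReal 0 1)).map hm ?_), ?_⟩
    · intro x y hxy
      exact Pi.single_mono a hxy
    · have := h3.conv (isG_single a)
      rw [add_zero, diagonal_add] at this
      have e : (fun i => if i ∈ insert a s then (1 : ℝ) else 0)
          = fun i => (if i ∈ s then (1 : ℝ) else 0) + (Pi.single a 1 : ι → ℝ) i := by
        funext i
        by_cases h : i = a
        · subst h; simp [ha]
        · simp [h]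
      rw [e]
      exact this

lemma assoc_N_one : Assoc (N 0 (1 : Matrix ι ι ℝ)) := by
  obtain ⟨ν, h1, h2, h3⟩ := exists_assoc (Finset.univ : Finset ι)
  have : IsG ν 0 (1 : Matrix ι ι ℝ) := by simpa using h3
  rw [(isG_N 0 PosSemidef.one).eq this]
  exact h2

open scoped MatrixOrder in
lemma exists_eps {S : Matrix ι ι ℝ} (hS : S.PosDef) :
    ∃ ε : ℝ, 0 < ε ∧ (S - (ε ^ 2) • (1 : Matrix ι ι ℝ)).PosSemidef := by
  rcases isEmpty_or_nonempty ι with h | h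
  · refine ⟨1, one_pos, ?_⟩
    convert PosSemidef.zero (n := ι) (R := ℝ)
    exact Subsingleton.elim _ _
  have := (CFC.exists_pos_algebraMap_le_iff (A := Matrix ι ι ℝ) (a := S) hS.1).2
    (fun x hx => by
      rw [hS.1.spectrum_real_eq_range_eigenvalues] at hx
      obtain ⟨i, rfl⟩ := hx
      exact hS.eigenvalues_pos i)
  obtain ⟨r, hr, h⟩ := this
  refine ⟨Real.sqrt r, Real.sqrt_pos.2 hr, ?_⟩
  rw [Real.sq_sqrt hr.le]
  have h2 := Matrix.le_iff.1 h
  rwa [Algebra.algebraMap_eq_smul_one] at h2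

/-- Pitt's theorem, nondegenerate case -/
lemma pitt {S : Matrix ι ι ℝ} (hS : S.PosDef) (h0 : ∀ i j, 0 ≤ S i j) : Assoc (N 0 S) := by
  obtain ⟨ε, hε, hT⟩ := exists_eps hS
  have hsm : Measurable (fun x : ι → ℝ => ε • x) := by fun_prop
  set ν := (N 0 (1 : Matrix ι ι ℝ)).map (fun x => ε • x) with hν
  set T := S - (ε ^ 2) • (1 : Matrix ι ι ℝ) with hTd
  have hp : IsProbabilityMeasure ν := Measure.isProbabilityMeasure_map hsm.aemeasurable
  have hA : Assoc ν := assoc_N_one.map hsm fun x y hxy => by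
    intro i
    exact mul_le_mul_of_nonneg_left (hxy i) hε.le
  have hG : IsG (N 0 T ∗ ν) 0 S := by
    have := (isG_N 0 hT).conv ((isG_N 0 (PosSemidef.one (n := ι) (R := ℝ))).map_smul ε)
    simpa [hTd] using this
  have heq : N 0 S = N 0 T ∗ ν := (isG_N 0 hS.posSemidef).eq hG
  have hT0 : ∀ i j, 0 ≤ T i j := by
    intro i j
    by_cases hij : i = j
    · subst hij
      exact hT.diag_nonneg
    · simpa [hTd, hij, Matrix.one_apply] using h0 i j
  intro f g hf hg hf' hg'
  rw [heq]
  obtain ⟨C1, hC1, h1⟩ := nice_smooth hf hf' hε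
  obtain ⟨C2, hC2, h2⟩ := nice_smooth hg hg' hε
  have := Cv_conv hf hg (N 0 T) ν (K := 0) (hA.translate hf hg hf' hg')
  have h3 := Cv_nice hT hT0 (hC1.trans (le_max_left C1 C2)) _ _
    (h1 _ (le_max_left C1 C2)) (h2 _ (le_max_right C1 C2))
  linarith

lemma assoc_density (m : ι → ℝ) {S : Matrix ι ι ℝ} (hS : S.PosDef) (h0 : ∀ i j, 0 ≤ S i j)
    (ν : Measure (ι → ℝ)) [IsProbabilityMeasure ν]
    (hν : ν = volume.withDensity fun x => ENNReal.ofReal (gaussDensity m S x)) : Assoc ν := by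
  have h1 : IsG ν m S := by rw [hν]; exact isG_density m hS
  have h2 : IsG (N 0 S ∗ Measure.dirac m) m S := by
    simpa using (isG_N 0 hS.posSemidef).conv (isG_dirac m)
  rw [h1.eq h2]
  exact (pitt hS h0).conv (assoc_dirac m)

end
end

lemma assoc_prod {α β : Type*} [MeasurableSpace α] [MeasurableSpace β] [Preorder α] [Preorder β]
    {μ : Measure α} {ν : Measure β} [IsProbabilityMeasure μ] [IsProbabilityMeasure ν]
    (h : Assoc μ) (h' : Assoc ν) : Assoc (μ.prod ν) := by
  intro f g hf hg hf' hg'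
  have mk : ∀ {F : α × β → ℝ}, BM F → ∀ x, BM (fun y => F (x, y)) :=
    fun hF x => hF.comp measurable_prodMk_left
  have mm : ∀ {F : α × β → ℝ}, Monotone F → ∀ x, Monotone (fun y => F (x, y)) :=
    fun hF x a b hab => hF ⟨le_rfl, hab⟩
  have mi : ∀ {F : α × β → ℝ}, BM F → Monotone F → Monotone (fun x => ∫ y, F (x, y) ∂ν) := by
    intro F hF hF' a b hab
    exact integral_mono ((mk hF a).integrable ν) ((mk hF b).integrable ν)
      fun y => hF' ⟨hab, le_rfl⟩
  have := Cv_prod hf hg μ ν (K := 0) fun x => h' _ _ (mk hf x) (mk hg x) (mm hf' x) (mm hg' x)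
  have h2 := h _ _ (hf.integral_right ν) (hg.integral_right ν) (mi hf hf') (mi hg hg')
  linarith

lemma farris_posDef {d : ℕ} (k : Fin d) (Γ : Matrix (Fin d) (Fin d) ℝ)
    (hsym : Γ.IsSymm) (hdiag : ∀ i, Γ i i = 0)
    (hscnd : ∀ x : Fin d → ℝ, x ≠ 0 → (∑ i, x i) = 0 → x ⬝ᵥ Γ.mulVec x < 0) :
    (farris Γ k).PosDef := by
  refine PosDef.of_dotProduct_mulVec_pos ?_ ?_
  · ext i j
    have := hsym.apply (i : Fin d) j
    simp only [farris, conjTranspose_apply, of_apply, star_trivial]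
    rw [this]; ring
  · intro z hz
    rw [star_trivial]
    have split : ∀ F : Fin d → ℝ, ∑ i, F i = F k + ∑ i : {i : Fin d // i ≠ k}, F i := fun F =>
      Fintype.sum_eq_add_sum_subtype_ne F k
    set s := ∑ i, z i with hs
    set x : Fin d → ℝ := fun i => if h : i = k then -s else z ⟨i, h⟩ with hx
    have hxk : x k = -s := by simp [hx]
    have hxi : ∀ i : {i : Fin d // i ≠ k}, x i = z i := fun i => by simp [hx, i.2]
    have hx0 : x ≠ 0 := by
      intro h
      apply hz
      funext i
      rw [← hxi i, h]; rfl
    have hsum : ∑ i, x i = 0 := by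
      rw [split, hxk]; simp [hxi, hs]
    have h := hscnd x hx0 hsum
    have hk : ∀ j, Γ k j = Γ j k := fun j => hsym.apply j k
    have e1 : x ⬝ᵥ Γ.mulVec x = -2 * s * ∑ i, z i * Γ i k + ∑ i, ∑ j, z i * z j * Γ i j := by
      have a1 : ∀ i, (Γ *ᵥ x) i = -(Γ i k * s) + ∑ j : {i : Fin d // i ≠ k}, Γ i j * z j := by
        intro i
        rw [mulVec, dotProduct, split, hxk]; simp [hxi]
      have a2 : x k * (Γ *ᵥ x) k = -s * ∑ i, z i * Γ i k := by
        rw [a1, hxk, hdiag]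
        simp only [hk, zero_mul, neg_zero, zero_add]
        congr 1
        exact Finset.sum_congr rfl fun i _ => by ring
      have a3 : ∀ i : {i : Fin d // i ≠ k}, x i * (Γ *ᵥ x) i
          = -s * (z i * Γ i k) + ∑ j : {i : Fin d // i ≠ k}, z i * z j * Γ i j := by
        intro i
        rw [a1, hxi, mul_add]
        congr 1
        · ring
        · rw [Finset.mul_sum]
          exact Finset.sum_congr rfl fun j _ => by ring
      rw [dotProduct, split, a2, Finset.sum_congr rfl fun i _ => a3 i, Finset.sum_add_distrib,
        ← Finset.mul_sum]
      ring
    have e2 : z ⬝ᵥ farris Γ k *ᵥ z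
        = s * ∑ i, z i * Γ i k - (∑ i, ∑ j, z i * z j * Γ i j) / 2 := by
      have c : z ⬝ᵥ farris Γ k *ᵥ z = ∑ i, ∑ j, (z i * Γ i k * z j / 2 + z i * (z j * Γ j k) / 2
          - z i * z j * Γ i j / 2) := by
        simp only [dotProduct, mulVec, farris, of_apply, Finset.mul_sum]
        exact Finset.sum_congr rfl fun i _ => Finset.sum_congr rfl fun j _ => by ring
      rw [c]
      simp only [Finset.sum_sub_distrib, Finset.sum_add_distrib, ← Finset.sum_div,
        ← Finset.mul_sum, ← Finset.sum_mul]
      rw [← hs]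
      ring
    rw [e2]
    rw [e1] at h
    linarith

end HR

/-- If `Γ` is strictly conditionally negative definite with zero diagonal and satisfies
the metric property, `W` is Gaussian with covariance `Σ^{(k)}` (the Farris transform of
`Γ` at `k`) and mean `(−Σ^{(k)}_{ii}/2)_{i≠k}`, and `E` is standard exponential
independent of `W`, then `Y` with `Y_k = E`, `Y_i = E + W_i` (`i ≠ k`) is
positively associated. -/
theorem HuslerReiss_metric_associated
    {Ω : Type*} [MeasurableSpace Ω] (μ : Measure Ω) [IsProbabilityMeasure μ]
    {d : ℕ} (k : Fin d) (Γ : Matrix (Fin d) (Fin d) ℝ)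
    (hsym : Γ.IsSymm) (hdiag : ∀ i, Γ i i = 0)
    (hscnd : ∀ x : Fin d → ℝ, x ≠ 0 → (∑ i, x i) = 0 → x ⬝ᵥ Γ.mulVec x < 0)
    (hmetric : ∀ i j l : Fin d, Γ i j ≤ Γ i l + Γ j l)
    (W : Ω → ({i : Fin d // i ≠ k} → ℝ)) (hWmeas : Measurable W)
    (hWdist : Measure.map W μ = volume.withDensity
      (fun x => ENNReal.ofReal
        (gaussDensity (fun i => -(farris Γ k i i) / 2) (farris Γ k) x)))
    (E : Ω → ℝ) (hEmeas : Measurable E)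
    (hEexp : Measure.map E μ = ProbabilityTheory.expMeasure 1)
    (hIndep : ProbabilityTheory.IndepFun E W μ)
    (Y : Ω → Fin d → ℝ)
    (hY : ∀ ω i, Y ω i = if h : i = k then E ω else E ω + W ω ⟨i, h⟩) :
    PositivelyAssociated μ Y := by
  have hPW : IsProbabilityMeasure (Measure.map W μ) :=
    Measure.isProbabilityMeasure_map hWmeas.aemeasurable
  have hPE : IsProbabilityMeasure (Measure.map E μ) :=
    Measure.isProbabilityMeasure_map hEmeas.aemeasurable
  have hpd := HR.farris_posDef k Γ hsym hdiag hscnd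
  have h0 : ∀ i j, 0 ≤ farris Γ k i j := by
    intro i j
    have := hmetric i j k
    simp only [farris, of_apply]
    linarith
  have hA := HR.assoc_density _ hpd h0 (Measure.map W μ) hWdist
  have hP := HR.assoc_prod (HR.assoc_real (Measure.map E μ)) hA
  rw [← (ProbabilityTheory.indepFun_iff_map_prod_eq_prod_map_map hEmeas.aemeasurable
    hWmeas.aemeasurable).1 hIndep] at hP
  set φ : ℝ × ({i : Fin d // i ≠ k} → ℝ) → Fin d → ℝ :=
    fun p i => if h : i = k then p.1 else p.1 + p.2 ⟨i, h⟩ with hφ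
  have hφm : Measurable φ := by
    refine measurable_pi_lambda _ fun i => ?_
    by_cases h : i = k
    · simp only [hφ, h, dite_true]; exact measurable_fst
    · simp only [hφ, h, dite_false]
      exact measurable_fst.add ((measurable_pi_apply _).comp measurable_snd)
  have hφmono : Monotone φ := by
    intro p q hpq i
    by_cases h : i = k
    · simp only [hφ, h, dite_true]; exact hpq.1
    · simp only [hφ, h, dite_false]
      exact add_le_add hpq.1 (hpq.2 _)
  have hEW : Measurable fun ω => (E ω, W ω) := hEmeas.prodMk hWmeas
  have hYe : ∀ ω, Y ω = φ (E ω, W ω) := fun ω => funext fun i => hY ω i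
  intro f g hf hg hfb hgb hfm hgm
  have hF : HR.BM f := ⟨hf, hfb⟩
  have hG : HR.BM g := ⟨hg, hgb⟩
  have key := hP.map hφm hφmono f g hF hG hfm hgm
  rw [HR.Cv_map hF hG _ hφm, HR.Cv_map (hF.comp hφm) (hG.comp hφm) _ hEW] at key
  simp only [hYe]
  exact key
end

section
/- Let Q ∈ 𝒬 and let i < j be indices in {1, …, d}. Then the partial derivative of the logarithm of the spanning tree polynomial with respect to the weight Q_{ij} equals the corresponding variogram entry: writing Q(t) for the matrix obtained from Q by replacing Q_{ij} and Q_{ji} by Q_{ij} + t, the function t ↦ log τ(Q(t)) is differentiable at t = 0 with derivative Γ(Q)_{ij}. -/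
open Matrix Finset

/-- `Θ(Q)`: `Θ(Q)_{ij} = −Q_{ij}` for `i ≠ j` and `Θ(Q)_{ii} = ∑_{j≠i} Q_{ij}`. -/
noncomputable def thetaOf {d : ℕ} (Q : Matrix (Fin d) (Fin d) ℝ) :
    Matrix (Fin d) (Fin d) ℝ :=
  Matrix.of fun i j => if i = j then ∑ l ∈ univ.filter (fun l => l ≠ i), Q i l else -Q i j

/-- Membership in `𝒬`: symmetric, zero diagonal, and `xᵀΘ(Q)x > 0` for every nonzero
`x` with `∑ᵢ xᵢ = 0`. -/
def memQ {d : ℕ} (Q : Matrix (Fin d) (Fin d) ℝ) : Prop :=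
  Q.IsSymm ∧ (∀ i, Q i i = 0) ∧
    ∀ x : Fin d → ℝ, x ≠ 0 → (∑ i, x i) = 0 → 0 < x ⬝ᵥ (thetaOf Q).mulVec x

/-- The centering matrix `P = I − (1/d)𝟙𝟙ᵀ`. -/
noncomputable def Pmat (d : ℕ) : Matrix (Fin d) (Fin d) ℝ :=
  1 - ((d : ℝ)⁻¹) • Matrix.of (fun _ _ : Fin d => (1 : ℝ))

/-- `S` is the matrix `Σ(Q)`: the unique symmetric matrix with `Σ(Q)𝟙 = 0` and
`Θ(Q)Σ(Q) = P`. -/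
def isSigmaOf {d : ℕ} (Q S : Matrix (Fin d) (Fin d) ℝ) : Prop :=
  S.IsSymm ∧ S.mulVec (fun _ => 1) = 0 ∧ thetaOf Q * S = Pmat d

/-- The variogram associated with `Σ`: `Γ_{ij} = Σ_{ii} + Σ_{jj} − 2Σ_{ij}`. -/
noncomputable def gammaOf {d : ℕ} (S : Matrix (Fin d) (Fin d) ℝ) :
    Matrix (Fin d) (Fin d) ℝ :=
  Matrix.of fun i j => S i i + S j j - 2 * S i j

/-- The inner product `⟨A, B⟩ = ∑_{i<j} A_{ij} B_{ij}` on symmetric matrices with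
zero diagonal. -/
noncomputable def sinner {d : ℕ} (A B : Matrix (Fin d) (Fin d) ℝ) : ℝ :=
  ∑ p ∈ univ.filter (fun p : Fin d × Fin d => p.1 < p.2), A p.1 p.2 * B p.1 p.2

open Classical in
/-- The spanning tree polynomial `τ(Q) = ∑_T ∏_{{i,j}∈T} Q_{ij}`, summed over all
spanning trees of the complete graph on `{1, …, d}`. -/
noncomputable def tau {d : ℕ} (Q : Matrix (Fin d) (Fin d) ℝ) : ℝ :=
  ∑ T ∈ (univ : Finset (SimpleGraph (Fin d))).filter (fun T => T.IsTree),
    ∏ p ∈ univ.filter (fun p : Fin d × Fin d => p.1 < p.2 ∧ T.Adj p.1 p.2), Q p.1 p.2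

/-- The Cayley–Menger matrix of `Γ`. -/
noncomputable def CM {d : ℕ} (Γ : Matrix (Fin d) (Fin d) ℝ) :
    Matrix (Fin (d + 1)) (Fin (d + 1)) ℝ :=
  Matrix.of fun a b =>
    if ha : (a : ℕ) < d then
      (if hb : (b : ℕ) < d then -Γ ⟨a, ha⟩ ⟨b, hb⟩ / 2 else 1)
    else (if (b : ℕ) < d then -1 else 0)

/-- Membership in the cone `𝒞^d` of symmetric matrices with zero diagonal that are
strictly conditionally negative definite. -/
def memC {d : ℕ} (Γ : Matrix (Fin d) (Fin d) ℝ) : Prop :=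
  Γ.IsSymm ∧ (∀ i, Γ i i = 0) ∧
    ∀ x : Fin d → ℝ, x ≠ 0 → (∑ i, x i) = 0 → x ⬝ᵥ Γ.mulVec x < 0

namespace MTT

/-- `f` is a parent function of a tree rooted at `r`. -/
def Good {d : ℕ} (r : Fin d) (f : Fin d → Fin d) : Prop :=
  f r = r ∧ ∀ v, ∃ k : ℕ, f^[k] v = r

lemma Good.invariant {d : ℕ} {r : Fin d} {f : Fin d → Fin d} (h : Good r f)
    (P : Fin d → Prop) (v : Fin d) (hv : P v) (hP : ∀ u, P u → P (f u)) : P r := by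
  obtain ⟨k, hk⟩ := h.2 v
  rw [← hk]
  clear hk
  induction k with
  | zero => simpa using hv
  | succ k ih => rw [Function.iterate_succ_apply']; exact hP _ ih

lemma Good.no_two_cycle {d : ℕ} {r : Fin d} {f : Fin d → Fin d} (h : Good r f)
    {v w : Fin d} (hv : v ≠ r) (hw : f v = w) (hw' : f w = v) : False := by
  have h1 : r = v ∨ r = w := by
    apply h.invariant (fun u => u = v ∨ u = w) v (Or.inl rfl)
    rintro u (rfl | rfl)
    · exact Or.inr hw
    · exact Or.inl hw'
  rcases h1 with h1 | h1
  · exact hv h1.symm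
  · rw [← h1, h.1] at hw'
    exact hv hw'.symm

lemma Good.ne {d : ℕ} {r : Fin d} {f : Fin d → Fin d} (h : Good r f)
    {v : Fin d} (hv : v ≠ r) : f v ≠ v := fun hf => h.no_two_cycle hv hf hf

/-- The graph with edges `v ~ f v`. -/
def gr {d : ℕ} (f : Fin d → Fin d) : SimpleGraph (Fin d) where
  Adj a b := a ≠ b ∧ (f a = b ∨ f b = a)
  symm := ⟨fun _ _ h => ⟨h.1.symm, h.2.symm⟩⟩
  loopless := ⟨fun _ h => h.1 rfl⟩

lemma Good.injOn {d : ℕ} {r : Fin d} {f : Fin d → Fin d} (h : Good r f) :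
    Set.InjOn (fun v => s(v, f v)) {v | v ≠ r} := by
  intro v hv w hw hvw
  simp only [Sym2.eq_iff] at hvw
  rcases hvw with h1 | h1
  · exact h1.1
  · exact (h.no_two_cycle hv h1.2 h1.1.symm).elim

lemma Good.edgeSet {d : ℕ} {r : Fin d} {f : Fin d → Fin d} (h : Good r f) :
    (gr f).edgeSet = Set.image (fun v => s(v, f v)) {v | v ≠ r} := by
  ext e
  induction e with | _ a b
  simp only [SimpleGraph.mem_edgeSet, gr, Set.mem_image, Set.mem_ofPred_eq]
  constructor
  · rintro ⟨hne, h1 | h1⟩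
    · refine ⟨a, ?_, by rw [h1]⟩
      rintro rfl
      exact hne (h.1.symm.trans h1)
    · refine ⟨b, ?_, by rw [h1, Sym2.eq_swap]⟩
      rintro rfl
      exact hne (h1.symm.trans h.1)
  · rintro ⟨v, hv, h1⟩
    have hn := h.ne hv
    rcases Sym2.eq_iff.1 h1 with ⟨rfl, rfl⟩ | ⟨rfl, rfl⟩
    · exact ⟨hn.symm, Or.inl rfl⟩
    · exact ⟨hn, Or.inr rfl⟩

lemma Good.connected {d : ℕ} {r : Fin d} {f : Fin d → Fin d} (h : Good r f) :
    (gr f).Connected := by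
  have step : ∀ v, (gr f).Reachable v (f v) := by
    intro v
    by_cases hv : v = f v
    · rw [← hv]
    · exact SimpleGraph.Adj.reachable (show (gr f).Adj v (f v) from ⟨hv, Or.inl rfl⟩)
  have hr : ∀ v, (gr f).Reachable v r := fun v =>
    h.invariant (fun u => (gr f).Reachable v u) v (SimpleGraph.Reachable.refl v)
      (fun u hu => hu.trans (step u))
  have : Nonempty (Fin d) := ⟨r⟩
  exact ⟨fun u v => (hr u).trans (hr v).symm⟩

lemma Good.isTree {d : ℕ} {r : Fin d} {f : Fin d → Fin d} (h : Good r f) :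
    (gr f).IsTree := by
  rw [SimpleGraph.isTree_iff_connected_and_card]
  refine ⟨h.connected, ?_⟩
  rw [h.edgeSet, Nat.card_image_of_injOn h.injOn]
  have : Nat.card {v : Fin d | v ≠ r} = d - 1 := by
    rw [Nat.card_eq_fintype_card]
    simp [Finset.filter_ne']
  rw [this]
  have := r.pos
  simp
  omega

lemma Good.gr_inj {d : ℕ} {r : Fin d} {f g : Fin d → Fin d} (hf : Good r f) (hg : Good r g)
    (h : gr f = gr g) : f = g := by
  funext v
  by_contra hv
  have := hg.invariant (fun u => f u ≠ g u) v hv (by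
    intro u hu hc
    have hur : u ≠ r := by
      rintro rfl
      exact hu (hf.1.trans hg.1.symm)
    have hadj : (gr g).Adj u (g u) := ⟨(hg.ne hur).symm, Or.inl rfl⟩
    rw [← h] at hadj
    rcases hadj.2 with h1 | h1
    · exact hu h1
    · exact hg.no_two_cycle hur rfl (hc.symm.trans h1))
  exact this (hf.1.trans hg.1.symm)

lemma exists_good {d : ℕ} (r : Fin d) (T : SimpleGraph (Fin d)) (hT : T.IsTree) :
    ∃ f, Good r f ∧ gr f = T := by
  have hstep : ∀ v, v ≠ r → ∃ w, T.Adj v w ∧ T.dist w r < T.dist v r := by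
    intro v hv
    obtain ⟨p, hp⟩ := hT.connected.exists_walk_length_eq_dist v r
    cases p with
    | nil => exact (hv rfl).elim
    | cons hadj q =>
      refine ⟨_, hadj, ?_⟩
      have := SimpleGraph.dist_le q
      simp at hp
      omega
  choose! f0 hf0 using hstep
  let f : Fin d → Fin d := fun v => if v = r then r else f0 v
  have hfr : f r = r := by simp [f]
  have hfv : ∀ v, v ≠ r → T.Adj v (f v) ∧ T.dist (f v) r < T.dist v r := by
    intro v hv
    simpa [f, hv] using hf0 v hv
  have hgood : Good r f := by
    refine ⟨hfr, ?_⟩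
    have : ∀ n v, T.dist v r ≤ n → ∃ k : ℕ, f^[k] v = r := by
      intro n
      induction n with
      | zero =>
        intro v hv
        by_cases h : v = r
        · exact ⟨0, h⟩
        · have := (hfv v h).2
          omega
      | succ n ih =>
        intro v hv
        by_cases h : v = r
        · exact ⟨0, h⟩
        · have := (hfv v h).2
          obtain ⟨k, hk⟩ := ih (f v) (by omega)
          exact ⟨k + 1, hk⟩
    exact fun v => this _ v le_rfl
  refine ⟨f, hgood, ?_⟩
  have hle : gr f ≤ T := by
    intro a b hab
    obtain ⟨hne, h1 | h1⟩ := hab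
    · have ha : a ≠ r := by
        rintro rfl
        exact hne (hfr.symm.trans h1)
      exact h1 ▸ (hfv a ha).1
    · have hb : b ≠ r := by
        rintro rfl
        exact hne (h1.symm.trans hfr)
      exact (h1 ▸ (hfv b hb).1).symm
  exact le_antisymm hle ((SimpleGraph.isTree_iff_minimal_connected.1 hT).2 hgood.connected hle)

open Classical in
lemma Good.prod {d : ℕ} {r : Fin d} {f : Fin d → Fin d} (h : Good r f)
    (Q : Matrix (Fin d) (Fin d) ℝ) (hQ : Q.IsSymm) :
    ∏ v ∈ univ.erase r, Q v (f v) =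
    ∏ p ∈ univ.filter (fun p : Fin d × Fin d => p.1 < p.2 ∧ (gr f).Adj p.1 p.2),
      Q p.1 p.2 := by
  refine Finset.prod_bij (fun v _ => if v < f v then (v, f v) else (f v, v)) ?_ ?_ ?_ ?_
  · intro v hv
    have hv : v ≠ r := by simpa using hv
    have hn := h.ne hv
    split_ifs with hlt
    · exact mem_filter.2 ⟨mem_univ _, hlt, hn.symm, Or.inl rfl⟩
    · exact mem_filter.2 ⟨mem_univ _, lt_of_le_of_ne (not_lt.1 hlt) hn, hn, Or.inr rfl⟩
  · intro v hv w hw hvw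
    have hv : v ≠ r := by simpa using hv
    have hw : w ≠ r := by simpa using hw
    apply h.injOn hv hw
    simp only [Sym2.eq_iff]
    split_ifs at hvw <;> simp only [Prod.mk.injEq] at hvw <;> tauto
  · rintro ⟨a, b⟩ hab
    simp only [mem_filter, mem_univ, true_and] at hab
    obtain ⟨hlt, hne, h1 | h1⟩ := hab
    · refine ⟨a, ?_, ?_⟩
      · simp only [mem_erase, mem_univ, and_true]
        rintro rfl
        exact hne (h.1.symm.trans h1)
      · simp [h1, hlt]
    · refine ⟨b, ?_, ?_⟩
      · simp only [mem_erase, mem_univ, and_true]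
        rintro rfl
        exact hne (h1.symm.trans h.1)
      · simp [h1, hlt.le]
  · intro v hv
    split_ifs
    · rfl
    · exact hQ.apply _ _

open Classical in
lemma tau_eq {d : ℕ} (r : Fin d) (Q : Matrix (Fin d) (Fin d) ℝ) (hQ : Q.IsSymm) :
    tau Q = ∑ f ∈ univ.filter (fun f => Good r f), ∏ v ∈ univ.erase r, Q v (f v) := by
  unfold tau
  symm
  refine Finset.sum_bij (fun f _ => gr f) ?_ ?_ ?_ ?_
  · intro f hf
    simp only [mem_filter, mem_univ, true_and] at hf ⊢
    exact hf.isTree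
  · intro f hf g hg hfg
    simp only [mem_filter, mem_univ, true_and] at hf hg
    exact hf.gr_inj hg hfg
  · intro T hT
    simp only [mem_filter, mem_univ, true_and] at hT
    obtain ⟨f, hf, rfl⟩ := exists_good r T hT
    exact ⟨f, by simpa using hf, rfl⟩
  · intro f hf
    simp only [mem_filter, mem_univ, true_and] at hf
    convert hf.prod Q hQ

/-- The rooted incidence matrix of a parent function. -/
def Nmat {d : ℕ} (r : Fin d) (f : Fin d → Fin d) : Matrix (Fin d) (Fin d) ℝ :=
  Matrix.of fun v w => if v ≠ r ∧ f v = w then 1 else 0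

lemma Nmat_mulVec {d : ℕ} (r : Fin d) (f : Fin d → Fin d) (x : Fin d → ℝ) (v : Fin d) :
    (Nmat r f *ᵥ x) v = if v = r then 0 else x (f v) := by
  by_cases hv : v = r <;> simp [Nmat, Matrix.mulVec, dotProduct, hv]

lemma Good.det_eq {d : ℕ} {r : Fin d} {f : Fin d → Fin d} (h : Good r f) :
    (1 - Nmat r f).det = 1 := by
  have key : ∀ k v x, f^[k] v = r → ((Nmat r f) ^ (k + 1) *ᵥ x) v = 0 := by
    intro k
    induction k with
    | zero =>
      intro v x hv
      have hv : v = r := hv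
      simp [Nmat_mulVec, hv]
    | succ k ih =>
      intro v x hv
      rw [pow_succ', ← Matrix.mulVec_mulVec, Nmat_mulVec]
      split_ifs
      · rfl
      · exact ih _ _ hv
  choose k hk using h.2
  have hit : ∀ n, f^[n] r = r := fun n => Function.iterate_fixed h.1 n
  have hK : ∀ v, f^[univ.sup k] v = r := by
    intro v
    have hle : k v ≤ univ.sup k := Finset.le_sup (mem_univ v)
    obtain ⟨m, hm⟩ := Nat.exists_eq_add_of_le' hle
    rw [hm, Function.iterate_add_apply, hk, hit]
  have hnil : IsNilpotent (Nmat r f) := by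
    refine ⟨univ.sup k + 1, ?_⟩
    apply Matrix.ext_of_mulVec_single
    intro i
    funext v
    rw [key _ _ _ (hK v)]
    simp
  have h1 := (Matrix.isNilpotent_charpoly_sub_pow_of_isNilpotent hnil).eq_zero
  have h2 := Matrix.eval_charpoly (Nmat r f) 1
  rw [sub_eq_zero.1 h1] at h2
  simpa using h2.symm

lemma det_eq_zero {d : ℕ} {r : Fin d} {f : Fin d → Fin d} (hr : f r = r) (h : ¬ Good r f) :
    (1 - Nmat r f).det = 0 := by
  classical
  have : ∃ v, ∀ k, f^[k] v ≠ r := by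
    by_contra hc
    push Not at hc
    exact h ⟨hr, hc⟩
  obtain ⟨v, hv⟩ := this
  apply Matrix.exists_mulVec_eq_zero_iff.1
  refine ⟨fun u => if ∃ k : ℕ, f^[k] u = r then 0 else 1, ?_, ?_⟩
  · intro h0
    have := congrFun h0 v
    simp [hv] at this
  · funext u
    rw [Matrix.sub_mulVec, Matrix.one_mulVec, Pi.sub_apply, Nmat_mulVec]
    by_cases hu : u = r
    · have : ∃ k : ℕ, f^[k] r = r := ⟨0, rfl⟩
      simp [hu, this]
    · have : (∃ k : ℕ, f^[k] u = r) ↔ ∃ k : ℕ, f^[k] (f u) = r := by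
        constructor
        · rintro ⟨k, hk⟩
          cases k with
          | zero => exact (hu hk).elim
          | succ k => exact ⟨k, hk⟩
        · rintro ⟨k, hk⟩
          exact ⟨k + 1, hk⟩
      simp only [hu, if_false, this]
      simp

/-- The weighted matrix-tree theorem. -/
lemma matrix_tree {d : ℕ} (r : Fin d) (Q : Matrix (Fin d) (Fin d) ℝ) (hQ : Q.IsSymm) :
    tau Q = ((thetaOf Q).updateRow r (Pi.single r 1)).det := by
  classical
  rw [tau_eq r Q hQ]
  let A : Fin d → Finset (Fin d) := fun v => if v = r then {r} else univ
  let g : Fin d → Fin d → (Fin d → ℝ) := fun v u =>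
    (if v = r then 1 else Q v u) • ((1 : Matrix (Fin d) (Fin d) ℝ) v -
      (if v = r then 0 else (1 : Matrix (Fin d) (Fin d) ℝ) u))
  have hM : (thetaOf Q).updateRow r (Pi.single r 1) = fun v => ∑ u ∈ A v, g v u := by
    funext v w
    by_cases hv : v = r
    · subst hv
      simp [A, g, Matrix.one_apply, Pi.single_apply, eq_comm]
    · rw [Matrix.updateRow_ne hv]
      simp only [A, g, hv, if_false, Finset.sum_apply, Pi.smul_apply, Pi.sub_apply, smul_eq_mul,
        thetaOf, Matrix.of_apply, Matrix.one_apply, mul_sub, Finset.sum_sub_distrib]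
      by_cases hvw : v = w
      · subst hvw
        simp [Finset.filter_ne', Finset.sum_erase_eq_sub]
      · simp [hvw]
  rw [hM]
  have := (Matrix.detRowAlternating (n := Fin d) (R := ℝ)).toMultilinearMap.map_sum_finset g A
  change Matrix.det (fun v => ∑ u ∈ A v, g v u) = _ at this
  rw [this]
  have hterm : ∀ f ∈ Fintype.piFinset A,
      (Matrix.detRowAlternating (n := Fin d) (R := ℝ)).toMultilinearMap (fun v => g v (f v)) =
      if Good r f then ∏ v ∈ univ.erase r, Q v (f v) else 0 := by
    intro f hf
    have hfr : f r = r := by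
      have := Fintype.mem_piFinset.1 hf r
      simpa [A] using this
    have e : (fun v => g v (f v)) = fun v => (if v = r then 1 else Q v (f v)) •
        (1 - Nmat r f) v := by
      funext v
      simp only [g]
      congr 1
      funext w
      by_cases hv : v = r <;> simp [Nmat, hv, Matrix.one_apply]
    rw [e]
    refine (MultilinearMap.map_smul_univ
      (Matrix.detRowAlternating (n := Fin d) (R := ℝ)).toMultilinearMap
      (fun v => if v = r then 1 else Q v (f v)) (fun v => (1 - Nmat r f) v)).trans ?_
    change _ • (1 - Nmat r f).det = _
    split_ifs with hg
    · rw [hg.det_eq, smul_eq_mul, mul_one, ← Finset.mul_prod_erase _ _ (mem_univ r)]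
      simp only [if_true, one_mul]
      apply Finset.prod_congr rfl
      intro v hv
      simp [Finset.ne_of_mem_erase hv]
    · rw [det_eq_zero hfr hg, smul_zero]
  rw [Finset.sum_congr rfl hterm, ← Finset.sum_filter]
  apply Finset.sum_congr _ (fun _ _ => rfl)
  ext f
  simp only [mem_filter, mem_univ, true_and, Fintype.mem_piFinset]
  constructor
  · intro h
    refine ⟨fun v => ?_, h⟩
    by_cases hv : v = r
    · subst hv
      simp [A, h.1]
    · simp [A, hv]
  · exact fun h => h.2

lemma theta_mulVec {d : ℕ} (Q : Matrix (Fin d) (Fin d) ℝ) (x : Fin d → ℝ) (v : Fin d) :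
    (thetaOf Q *ᵥ x) v = ∑ u, Q v u * (x v - x u) := by
  have h : ∀ u, thetaOf Q v u * x u =
      (if v = u then (∑ l, Q v l) * x u else 0) - Q v u * x u := by
    intro u
    by_cases hu : v = u
    · subst hu
      simp [thetaOf, Finset.filter_ne', Finset.sum_erase_eq_sub, sub_mul]
    · simp [thetaOf, hu]
  simp only [Matrix.mulVec, dotProduct, h, Finset.sum_sub_distrib, mul_sub]
  simp [Finset.sum_mul]

lemma theta_sum {d : ℕ} (Q : Matrix (Fin d) (Fin d) ℝ) (hQ : Q.IsSymm) (x : Fin d → ℝ) :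
    ∑ v, (thetaOf Q *ᵥ x) v = 0 := by
  simp only [theta_mulVec, mul_sub, Finset.sum_sub_distrib]
  rw [sub_eq_zero, Finset.sum_comm]
  refine Finset.sum_congr rfl fun u _ => Finset.sum_congr rfl fun v _ => ?_
  rw [hQ.apply]

lemma det_ne_zero {d : ℕ} (r : Fin d) (Q : Matrix (Fin d) (Fin d) ℝ) (hQ : memQ Q) :
    ((thetaOf Q).updateRow r (Pi.single r 1)).det ≠ 0 := by
  intro h0
  obtain ⟨x, hx0, hx⟩ := Matrix.exists_mulVec_eq_zero_iff.2 h0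
  have hrow : ∀ v, v ≠ r → (thetaOf Q *ᵥ x) v = 0 := by
    intro v hv
    have := congrFun hx v
    simpa [Matrix.mulVec, Matrix.updateRow_ne hv] using this
  have hxr : x r = 0 := by
    have := congrFun hx r
    simpa [Matrix.mulVec] using this
  have hrow' : (thetaOf Q *ᵥ x) r = 0 := by
    have := theta_sum Q hQ.1 x
    rwa [Finset.sum_eq_single r (fun v _ hv => hrow v hv) (by simp)] at this
  have hall : ∀ v, (thetaOf Q *ᵥ x) v = 0 := by
    intro v
    by_cases hv : v = r
    · rw [hv, hrow']
    · exact hrow v hv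
  have hd : (d : ℝ) ≠ 0 := by
    have := r.pos
    positivity
  let m : ℝ := (∑ v, x v) / d
  let y : Fin d → ℝ := fun v => x v - m
  have hy : thetaOf Q *ᵥ y = 0 := by
    funext v
    rw [theta_mulVec, Pi.zero_apply, ← hall v, theta_mulVec]
    simp [y]
  have hysum : ∑ v, y v = 0 := by
    simp [y, m]
    field_simp
    ring
  have hy0 : y = 0 := by
    by_contra hne
    have := hQ.2.2 y hne hysum
    rw [hy] at this
    simp at this
  apply hx0
  have h2 : ∀ v, x v = m := fun v => sub_eq_zero.1 (congrFun hy0 v)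
  funext v
  rw [h2 v, ← h2 r, hxr]
  rfl

lemma det_updateRow {d : ℕ} (M : Matrix (Fin d) (Fin d) ℝ) (j : Fin d) (w y : Fin d → ℝ)
    (hy : M *ᵥ y = Pi.single j 1) : (M.updateRow j w).det = M.det * (w ⬝ᵥ y) := by
  have h := Matrix.mulVec_cramer Mᵀ w
  have h2 := congrArg (fun z => z ⬝ᵥ y) h
  simp only [Matrix.mulVec_transpose, ← Matrix.dotProduct_mulVec, hy, Matrix.det_transpose,
    smul_dotProduct, dotProduct_single, mul_one, smul_eq_mul] at h2
  rw [← h2, Matrix.cramer_transpose_apply]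

lemma sigma_mulVec {d : ℕ} (Q S : Matrix (Fin d) (Fin d) ℝ) (hS : isSigmaOf Q S) (i j : Fin d)
    (c : ℝ) : thetaOf Q *ᵥ (fun a => S a j - S a i - c) = Pi.single j 1 - Pi.single i 1 := by
  funext v
  have h : ∀ b, (thetaOf Q *ᵥ (fun a => S a b)) v = Pmat d v b := by
    intro b
    rw [← hS.2.2]
    rfl
  have e : (thetaOf Q *ᵥ (fun a => S a j - S a i - c)) v = Pmat d v j - Pmat d v i := by
    rw [← h, ← h]
    simp only [theta_mulVec, ← Finset.sum_sub_distrib]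
    refine Finset.sum_congr rfl fun u _ => ?_
    ring
  rw [e]
  simp [Pmat, Matrix.one_apply, Pi.single_apply]

lemma tau_line {d : ℕ} (Q S : Matrix (Fin d) (Fin d) ℝ)
    (hQ : memQ Q) (hS : isSigmaOf Q S) (i j : Fin d) (hij : i ≠ j) (t : ℝ) :
    tau (Matrix.of fun a b =>
        Q a b + (if (a = i ∧ b = j) ∨ (a = j ∧ b = i) then t else 0)) =
      tau Q + t * (tau Q * gammaOf S i j) := by
  have hsymm : (Matrix.of fun a b =>
        Q a b + (if (a = i ∧ b = j) ∨ (a = j ∧ b = i) then t else 0)).IsSymm := by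
    ext a b
    simp only [Matrix.transpose_apply, Matrix.of_apply]
    rw [hQ.1.apply]
    congr 1
    apply if_congr _ rfl rfl
    tauto
  rw [matrix_tree i _ hsymm, matrix_tree i _ hQ.1]
  set M := (thetaOf Q).updateRow i (Pi.single i 1) with hM
  have hrow : (thetaOf (Matrix.of fun a b =>
        Q a b + (if (a = i ∧ b = j) ∨ (a = j ∧ b = i) then t else 0))).updateRow i
          (Pi.single i 1) =
      M.updateRow j (M j + t • (Pi.single j 1 - Pi.single i 1)) := by
    ext v w
    by_cases hv : v = i
    · subst hv
      rw [Matrix.updateRow_self, Matrix.updateRow_ne hij, hM, Matrix.updateRow_self]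
    · rw [Matrix.updateRow_ne hv]
      by_cases hvj : v = j
      · subst hvj
        rw [Matrix.updateRow_self, Pi.add_apply, hM, Matrix.updateRow_ne hv]
        by_cases hw : v = w
        · subst hw
          simp [thetaOf, hv, Finset.sum_add_distrib, Finset.filter_ne']
        · simp [thetaOf, hv, hw, Pi.single_apply, Ne.symm hw]
          split_ifs <;> ring
      · rw [Matrix.updateRow_ne hvj, hM, Matrix.updateRow_ne hv]
        simp [thetaOf, hv, hvj]
  have hy : M *ᵥ (fun a => S a j - S a i - (S i j - S i i)) = Pi.single j 1 := by
    have h := sigma_mulVec Q S hS i j (S i j - S i i)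
    funext v
    by_cases hv : v = i
    · subst hv
      simp [hM, Matrix.mulVec, hij]
    · have := congrFun h v
      simpa [hM, Matrix.mulVec, Matrix.updateRow_ne hv, hv] using this
  rw [hrow, Matrix.det_updateRow_add, Matrix.updateRow_eq_self, Matrix.det_updateRow_smul,
    det_updateRow M j _ _ hy]
  congr 3
  have hs : S j i = S i j := hS.1.apply _ _
  simp [sub_dotProduct, gammaOf, hs]
  ring

end MTT

/-- The partial derivative of `log τ` with respect to the weight `Q_{ij}` equals the
variogram entry `Γ(Q)_{ij}`. -/
theorem hasDerivAt_log_tau {d : ℕ} (Q S : Matrix (Fin d) (Fin d) ℝ)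
    (hQ : memQ Q) (hS : isSigmaOf Q S) (i j : Fin d) (hij : i < j) :
    HasDerivAt
      (fun t : ℝ => Real.log (tau (Matrix.of fun a b =>
        Q a b + (if (a = i ∧ b = j) ∨ (a = j ∧ b = i) then t else 0))))
      (gammaOf S i j) 0 := by
  have h0 := MTT.tau_line Q S hQ hS i j hij.ne
  have hne : tau Q ≠ 0 := by
    rw [MTT.matrix_tree i Q hQ.1]
    exact MTT.det_ne_zero i Q hQ
  simp only [h0]
  have hd : HasDerivAt (fun t : ℝ => tau Q + t * (tau Q * gammaOf S i j))
      (tau Q * gammaOf S i j) 0 := by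
    simpa using ((hasDerivAt_id (0 : ℝ)).mul_const (tau Q * gammaOf S i j)).const_add (tau Q)
  have := hd.log (by simpa using hne)
  convert this using 1
  field_simp
  simp
end

section
/- For every Q ∈ 𝒬, the determinant of the Cayley–Menger matrix of the variogram Γ(Q) is the reciprocal of the spanning tree polynomial: det(CM(Γ(Q))) · τ(Q) = 1. In particular det(CM(Γ(Q))) > 0 and (1/2) log det(CM(Γ(Q))) = −(1/2) log τ(Q). -/
open Matrix Finset

/-- `f` is the parent map of a tree rooted at `r`. -/
def MTRooted {d : ℕ} (r : Fin d) (f : Fin d → Fin d) : Prop :=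
  f r = r ∧ ∀ i, ∃ k, f^[k] i = r

/-- graph of a parent map -/
def MTGraph {d : ℕ} (f : Fin d → Fin d) : SimpleGraph (Fin d) where
  Adj a b := a ≠ b ∧ (f a = b ∨ f b = a)
  symm := ⟨fun _ _ h => ⟨h.1.symm, h.2.symm⟩⟩
  loopless := ⟨fun _ h => h.1 rfl⟩

theorem MTRooted.no_two_cycle {d : ℕ} {r : Fin d} {f : Fin d → Fin d} (h : MTRooted r f)
    {i : Fin d} (hi : i ≠ r) (h2 : f (f i) = i) : False := by
  have hj : f i ≠ r := fun e => hi (by rw [e, h.1] at h2; exact h2.symm)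
  obtain ⟨k, hk⟩ := h.2 i
  have key : ∀ k, f^[k] i = i ∨ f^[k] i = f i := by
    intro k
    induction k with
    | zero => left; rfl
    | succ k ih =>
      rw [Function.iterate_succ_apply']
      rcases ih with e | e <;> rw [e]
      · right; rfl
      · left; exact h2
  rcases key k with e | e
  · exact hi (e ▸ hk)
  · exact hj (e ▸ hk)

theorem MTRooted.ne {d : ℕ} {r : Fin d} {f : Fin d → Fin d} (h : MTRooted r f)
    {i : Fin d} (hi : i ≠ r) : f i ≠ i :=
  fun e => h.no_two_cycle hi (by rw [e, e])

theorem MTRooted.sym_inj {d : ℕ} {r : Fin d} {f : Fin d → Fin d} (h : MTRooted r f)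
    {i j : Fin d} (hi : i ≠ r) (e : s(i, f i) = s(j, f j)) : i = j := by
  rw [Sym2.eq_iff] at e
  rcases e with e | e
  · exact e.1
  · exact (h.no_two_cycle hi (by rw [e.2]; exact e.1.symm)).elim

theorem MTRooted.connected {d : ℕ} {r : Fin d} {f : Fin d → Fin d} (h : MTRooted r f) :
    (MTGraph f).Connected := by
  have key : ∀ k i, f^[k] i = r → (MTGraph f).Reachable i r := by
    intro k
    induction k with
    | zero => intro i hi; rw [← hi]; rfl
    | succ k ih =>
      intro i hi
      rw [Function.iterate_succ_apply] at hi
      by_cases hir : i = r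
      · rw [hir]
      · refine SimpleGraph.Reachable.trans (SimpleGraph.Adj.reachable ?_) (ih _ hi)
        exact ⟨(h.ne hir).symm, Or.inl rfl⟩
  have k2 : ∀ i, (MTGraph f).Reachable i r := fun i => by
    obtain ⟨k, hk⟩ := h.2 i
    exact key k i hk
  have : Nonempty (Fin d) := ⟨r⟩
  exact ⟨fun a b => (k2 a).trans (k2 b).symm⟩

theorem MTRooted.edgeSet_eq {d : ℕ} {r : Fin d} {f : Fin d → Fin d} (h : MTRooted r f) :
    (MTGraph f).edgeSet = ((univ.erase r).image (fun i => s(i, f i)) : Finset _) := by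
  ext e
  induction e using Sym2.ind with
  | _ a b =>
    rw [SimpleGraph.mem_edgeSet]
    simp only [coe_image, coe_erase, coe_univ, Set.mem_image, Set.mem_sdiff, Set.mem_univ, true_and,
      Set.mem_singleton_iff]
    constructor
    · rintro ⟨hab, e | e⟩
      · refine ⟨a, ?_, by rw [e]⟩
        rintro rfl
        exact hab (h.1.symm.trans e)
      · refine ⟨b, ?_, by rw [e, Sym2.eq_swap]⟩
        rintro rfl
        exact hab (e.symm.trans h.1)
    · rintro ⟨i, hi, e⟩
      rw [Sym2.eq_iff] at e
      rcases e with ⟨rfl, rfl⟩ | ⟨rfl, rfl⟩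
      · exact ⟨(h.ne hi).symm, Or.inl rfl⟩
      · exact ⟨h.ne hi, Or.inr rfl⟩

theorem MTRooted.isTree {d : ℕ} {r : Fin d} {f : Fin d → Fin d} (h : MTRooted r f) :
    (MTGraph f).IsTree := by
  rw [SimpleGraph.isTree_iff_connected_and_card]
  refine ⟨h.connected, ?_⟩
  rw [h.edgeSet_eq, Nat.card_coe_set_eq, Set.ncard_coe_finset, card_image_of_injOn,
    card_erase_of_mem (mem_univ _), card_univ, Nat.card_eq_fintype_card]
  · have := Fintype.card_pos_iff.mpr ⟨r⟩
    omega
  · intro i hi j _ e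
    exact h.sym_inj (by simpa using hi) e

theorem MTGraph_inj {d : ℕ} {r : Fin d} {f g : Fin d → Fin d} (hf : MTRooted r f)
    (hg : MTRooted r g) (e : MTGraph f = MTGraph g) : f = g := by
  have key : ∀ k i, f^[k] i = r → f i = g i := by
    intro k
    induction k with
    | zero => intro i hi; have : i = r := hi; rw [this, hf.1, hg.1]
    | succ k ih =>
      intro i hi
      by_cases hir : i = r
      · rw [hir, hf.1, hg.1]
      rw [Function.iterate_succ_apply] at hi
      have h1 := ih _ hi
      have h2 : (MTGraph f).Adj i (f i) := ⟨(hf.ne hir).symm, Or.inl rfl⟩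
      rw [e] at h2
      rcases h2.2 with h3 | h3
      · exact h3.symm
      · exact (hf.no_two_cycle hir (h1.trans h3)).elim
  funext i
  obtain ⟨k, hk⟩ := hf.2 i
  exact key k i hk

theorem MTGraph_surj {d : ℕ} (r : Fin d) {T : SimpleGraph (Fin d)} (hT : T.IsTree) :
    ∃ f, MTRooted r f ∧ MTGraph f = T := by
  classical
  have ex : ∀ i, ∃ j, (i = r → j = r) ∧ (i ≠ r → T.Adj i j ∧ T.dist j r < T.dist i r) := by
    intro i
    by_cases hi : i = r
    · exact ⟨r, fun _ => rfl, fun h => (h hi).elim⟩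
    · obtain ⟨p, hp⟩ := hT.connected.exists_walk_length_eq_dist i r
      cases p with
      | nil => exact (hi rfl).elim
      | @cons _ j _ hadj q =>
        refine ⟨j, fun h => (hi h).elim, fun _ => ⟨hadj, ?_⟩⟩
        have := SimpleGraph.dist_le q
        rw [SimpleGraph.Walk.length_cons] at hp
        omega
  choose f hf1 hf2 using ex
  have hR : MTRooted r f := by
    refine ⟨hf1 r rfl, ?_⟩
    have : ∀ n i, T.dist i r = n → ∃ k, f^[k] i = r := by
      intro n
      induction n using Nat.strong_induction_on with
      | _ n ih =>
        intro i hi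
        by_cases hir : i = r
        · exact ⟨0, hir⟩
        · obtain ⟨k, hk⟩ := ih _ (hi ▸ (hf2 i hir).2) (f i) rfl
          exact ⟨k + 1, by rw [Function.iterate_succ_apply]; exact hk⟩
    exact fun i => this _ i rfl
  refine ⟨f, hR, ?_⟩
  have hle : MTGraph f ≤ T := by
    rintro a b ⟨hab, e | e⟩
    · have : a ≠ r := by rintro rfl; exact hab (by rw [← e, hR.1])
      exact e ▸ (hf2 a this).1
    · have : b ≠ r := by rintro rfl; exact hab (by rw [← e, hR.1])
      exact (e ▸ (hf2 b this).1).symm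
  have c1 := hR.isTree.card_edgeFinset
  have c2 := hT.card_edgeFinset
  rw [← SimpleGraph.edgeFinset_inj]
  refine Finset.eq_of_subset_of_card_le (SimpleGraph.edgeFinset_mono hle) (by omega)

theorem MTRooted.prod_eq {d : ℕ} {r : Fin d} {f : Fin d → Fin d} (h : MTRooted r f)
    [DecidableRel (MTGraph f).Adj]
    (Q : Matrix (Fin d) (Fin d) ℝ) (hQ : Q.IsSymm) :
    ∏ p ∈ univ.filter (fun p : Fin d × Fin d => p.1 < p.2 ∧ (MTGraph f).Adj p.1 p.2), Q p.1 p.2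
      = ∏ i ∈ univ.erase r, Q i (f i) := by
  symm
  refine Finset.prod_bij (fun i _ => if i < f i then (i, f i) else (f i, i)) ?_ ?_ ?_ ?_
  · intro i hi
    have hi' : i ≠ r := by simpa using hi
    have hne := h.ne hi'
    rw [mem_filter]
    refine ⟨mem_univ _, ?_⟩
    split_ifs with hlt
    · exact ⟨hlt, hne.symm, Or.inl rfl⟩
    · exact ⟨lt_of_le_of_ne (not_lt.mp hlt) hne, hne, Or.inr rfl⟩
  · intro i hi j hj e
    refine h.sym_inj (by simpa using hi) ?_
    rw [Sym2.eq_iff]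
    split_ifs at e <;> simp only [Prod.mk.injEq] at e <;> tauto
  · rintro ⟨a, b⟩ hp
    rw [mem_filter] at hp
    obtain ⟨-, hlt, hab, e | e⟩ := hp
    · refine ⟨a, ?_, ?_⟩
      · simp only [mem_erase, mem_univ, and_true]
        rintro rfl
        exact hab (h.1.symm.trans e)
      · simp only at e hlt
        simp [e, hlt]
    · refine ⟨b, ?_, ?_⟩
      · simp only [mem_erase, mem_univ, and_true]
        rintro rfl
        exact hab (e.symm.trans h.1)
      · simp only at e hlt
        simp [e, hlt.le]
  · intro i _
    split_ifs
    · rfl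
    · exact (hQ.apply _ _).symm

open Classical in
theorem tau_eq_sum_rooted {d : ℕ} (r : Fin d) (Q : Matrix (Fin d) (Fin d) ℝ) (hQ : Q.IsSymm) :
    tau Q = ∑ f ∈ univ.filter (fun f : Fin d → Fin d => MTRooted r f),
      ∏ i ∈ univ.erase r, Q i (f i) := by
  unfold tau
  symm
  refine Finset.sum_bij (fun f _ => MTGraph f) ?_ ?_ ?_ ?_
  · intro f hf
    exact mem_filter.mpr ⟨mem_univ _, (mem_filter.mp hf).2.isTree⟩
  · intro f hf g hg e
    exact MTGraph_inj (mem_filter.mp hf).2 (mem_filter.mp hg).2 e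
  · intro T hT
    obtain ⟨f, hf, e⟩ := MTGraph_surj r (mem_filter.mp hT).2
    exact ⟨f, mem_filter.mpr ⟨mem_univ _, hf⟩, e⟩
  · intro f hf
    rw [← (mem_filter.mp hf).2.prod_eq Q hQ]

/-- rows `e_i - e_{f i}`, with row `r` equal to `e_r`. -/
noncomputable def MTrow {d : ℕ} (r i j : Fin d) : Fin d → ℝ :=
  if i = r then Pi.single r 1 else Pi.single i 1 - Pi.single j 1

theorem MTdet_rooted {d : ℕ} {r : Fin d} {f : Fin d → Fin d} (h : MTRooted r f) :
    (Matrix.of fun i => MTrow r i (f i)).det = 1 := by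
  classical
  set N : Matrix (Fin d) (Fin d) ℝ := Matrix.of fun i => MTrow r i (f i) with hN
  let b : Fin d → ℕ := fun i => Nat.find (h.2 i)
  have hb : ∀ i, i ≠ r → b (f i) < b i := by
    intro i hi
    have h1 : f^[b i] i = r := Nat.find_spec (h.2 i)
    have h0 : b i ≠ 0 := fun e => hi (by rw [e] at h1; exact h1)
    obtain ⟨k, hk⟩ := Nat.exists_eq_succ_of_ne_zero h0
    rw [hk] at h1 ⊢
    rw [Nat.succ_eq_add_one, Function.iterate_succ_apply] at h1
    exact Nat.lt_succ_of_le (Nat.find_min' _ h1)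
  have hval : ∀ i j, b i ≤ b j → N i j = if i = j then 1 else 0 := by
    intro i j hij
    by_cases hi : i = r
    · subst hi
      simp [hN, MTrow, Pi.single_apply, @eq_comm _ j i]
    · have : j ≠ f i := by
        rintro rfl
        exact absurd (hb i hi) (not_lt.mpr hij)
      simp [hN, MTrow, hi, Pi.single_apply, this, @eq_comm _ j i]
  have hT : Nᵀ.BlockTriangular b := by
    intro i j hij
    rw [Matrix.transpose_apply, hval j i hij.le, if_neg]
    rintro rfl
    exact lt_irrefl _ hij
  rw [← Matrix.det_transpose, hT.det]
  refine Finset.prod_eq_one fun a _ => ?_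
  have : Nᵀ.toSquareBlock b a = 1 := by
    ext i j
    rw [Matrix.toSquareBlock_def, Matrix.of_apply, Matrix.transpose_apply,
      hval _ _ (by rw [i.2, j.2]), Matrix.one_apply]
    simp [Subtype.ext_iff, @eq_comm _ (j : Fin d)]
  rw [this, Matrix.det_one]

theorem MTdet_not_rooted {d : ℕ} {r : Fin d} {f : Fin d → Fin d} (hr : f r = r)
    (h : ¬ MTRooted r f) :
    (Matrix.of fun i => MTrow r i (f i)).det = 0 := by
  classical
  have h' : ∃ i, ¬ ∃ k, f^[k] i = r := by
    by_contra hc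
    push Not at hc
    exact h ⟨hr, hc⟩
  obtain ⟨i0, hi0⟩ := h'
  rw [← Matrix.exists_mulVec_eq_zero_iff]
  refine ⟨fun i => if ∃ k, f^[k] i = r then 0 else 1, ?_, ?_⟩
  · intro e
    have := congrFun e i0
    simp only [if_neg hi0, Pi.zero_apply, one_ne_zero] at this
  · funext i
    change MTrow r i (f i) ⬝ᵥ _ = 0
    unfold MTrow
    by_cases hi : i = r
    · rw [if_pos hi, single_one_dotProduct, if_pos ⟨0, rfl⟩]
    · rw [if_neg hi, sub_dotProduct, single_one_dotProduct, single_one_dotProduct, sub_eq_zero]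
      refine if_congr ?_ rfl rfl
      constructor
      · rintro ⟨k, hk⟩
        cases k with
        | zero => exact (hi hk).elim
        | succ k => exact ⟨k, by rw [← Function.iterate_succ_apply]; exact hk⟩
      · rintro ⟨k, hk⟩
        exact ⟨k + 1, by rw [Function.iterate_succ_apply]; exact hk⟩

/-- Matrix tree theorem. -/
theorem MT_matrix_tree {d : ℕ} (r : Fin d) (Q : Matrix (Fin d) (Fin d) ℝ) (hQ : Q.IsSymm) :
    ((thetaOf Q).updateRow r (Pi.single r 1)).det = tau Q := by
  classical
  let W : Fin d → Fin d → ℝ := fun i j => if i = r then (if j = r then 1 else 0) else Q i j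
  have hM : ((thetaOf Q).updateRow r (Pi.single r 1)) =
      fun i => ∑ j, W i j • MTrow r i j := by
    funext i
    by_cases hi : i = r
    · subst hi
      rw [Matrix.updateRow_self]
      simp [W, MTrow]
    · rw [Matrix.updateRow_ne hi]
      funext l
      rw [Finset.sum_apply]
      simp only [W, MTrow, if_neg hi, Pi.smul_apply, Pi.sub_apply, smul_eq_mul, thetaOf,
        Matrix.of_apply, Pi.single_apply]
      by_cases hil : i = l
      · subst hil
        rw [if_pos rfl, Finset.sum_filter]
        refine Finset.sum_congr rfl fun j _ => ?_
        by_cases hj : i = j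
        · simp [hj]
        · simp [hj, Ne.symm hj]
      · rw [if_neg hil]
        simp [Ne.symm hil]
  have h1 : ((thetaOf Q).updateRow r (Pi.single r 1)).det =
      ∑ f : Fin d → Fin d, (Matrix.detRowAlternating (R := ℝ) (n := Fin d)).toMultilinearMap
        (fun i => W i (f i) • MTrow r i (f i)) := by
    have h2 := (Matrix.detRowAlternating (R := ℝ) (n := Fin d)).toMultilinearMap.map_sum
      (fun i j => W i j • MTrow r i j)
    rw [← hM] at h2
    exact h2
  rw [h1, tau_eq_sum_rooted r Q hQ, Finset.sum_filter]
  refine Finset.sum_congr rfl fun f _ => ?_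
  rw [MultilinearMap.map_smul_univ]
  have hd : (Matrix.detRowAlternating (R := ℝ) (n := Fin d)).toMultilinearMap
      (fun i => MTrow r i (f i)) = (Matrix.of fun i => MTrow r i (f i)).det := rfl
  rw [hd, ← Finset.mul_prod_erase univ _ (mem_univ r)]
  have hp : ∏ i ∈ univ.erase r, W i (f i) = ∏ i ∈ univ.erase r, Q i (f i) := by
    refine Finset.prod_congr rfl fun i hi => ?_
    have : i ≠ r := by simpa using hi
    simp [W, this]
  rw [hp]
  by_cases hr : f r = r
  · by_cases hR : MTRooted r f
    · rw [MTdet_rooted hR, if_pos hR]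
      simp [W, hr]
    · rw [MTdet_not_rooted hr hR, if_neg hR, smul_zero]
  · rw [if_neg (fun hR => hr hR.1)]
    simp [W, hr]

theorem MT_theta_symm {d : ℕ} {Q : Matrix (Fin d) (Fin d) ℝ} (hQ : Q.IsSymm) :
    (thetaOf Q).IsSymm := by
  refine Matrix.IsSymm.ext fun i j => ?_
  by_cases h : i = j
  · rw [h]
  · simp [thetaOf, h, Ne.symm h, hQ.apply]

theorem MT_theta_row_sum {d : ℕ} (Q : Matrix (Fin d) (Fin d) ℝ) (i : Fin d) :
    ∑ j, thetaOf Q i j = 0 := by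
  rw [← Finset.add_sum_erase univ _ (mem_univ i)]
  have h1 : thetaOf Q i i = ∑ j ∈ univ.erase i, Q i j := by
    simp only [thetaOf, Matrix.of_apply, if_pos rfl]
    refine Finset.sum_congr ?_ fun _ _ => rfl
    ext j
    simp
  rw [h1, ← Finset.sum_add_distrib]
  refine Finset.sum_eq_zero fun j hj => ?_
  have : i ≠ j := by simpa [eq_comm] using hj
  simp [thetaOf, this]

theorem MT_det_theta_add {d : ℕ} (r : Fin d) (Q : Matrix (Fin d) (Fin d) ℝ) (hQ : Q.IsSymm) :
    (thetaOf Q + Matrix.single r r 1).det = tau Q := by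
  rw [← MT_matrix_tree r Q hQ]
  have h := Matrix.det_updateRow_sum (thetaOf Q + Matrix.single r r 1) r (fun _ => 1)
  rw [one_smul] at h
  rw [← h]
  congr 1
  ext i j
  by_cases hi : i = r
  · subst hi
    rw [Matrix.updateRow_self, Matrix.updateRow_self, Finset.sum_apply]
    simp only [one_smul, Matrix.add_apply, Finset.sum_add_distrib]
    have : ∑ k, thetaOf Q k j = 0 := by
      rw [← MT_theta_row_sum Q j]
      exact Finset.sum_congr rfl fun k _ => (MT_theta_symm hQ).apply _ _
    rw [this, zero_add, Finset.sum_eq_single i]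
    · simp [Matrix.single_apply, Pi.single_apply, eq_comm]
    · intro b _ hb
      simp [Matrix.single_apply, hb.symm]
    · simp
  · rw [Matrix.updateRow_ne hi, Matrix.updateRow_ne hi]
    simp [Matrix.single_apply, Ne.symm hi]

theorem MT_tau_pos {d : ℕ} (hd : 0 < d) (Q : Matrix (Fin d) (Fin d) ℝ) (hQ : memQ Q) :
    0 < tau Q := by
  let r : Fin d := ⟨0, hd⟩
  have hd' : (d : ℝ) ≠ 0 := by positivity
  rw [← MT_det_theta_add r Q hQ.1]
  refine Matrix.PosDef.det_pos (Matrix.PosDef.of_dotProduct_mulVec_pos ?_ ?_)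
  · have h1 := MT_theta_symm hQ.1
    unfold Matrix.IsHermitian
    rw [Matrix.conjTranspose_eq_transpose_of_trivial, Matrix.transpose_add, h1.eq,
      Matrix.transpose_single]
  · intro x hx
    have hone : (thetaOf Q).mulVec (fun _ => 1) = 0 := by
      funext i
      simpa [Matrix.mulVec, dotProduct] using MT_theta_row_sum Q i
    set m : ℝ := (∑ i, x i) / d with hm
    set y : Fin d → ℝ := fun i => x i - m with hy
    have hxy : x = y + m • (fun _ => (1 : ℝ)) := by
      funext i; simp [hy]
    have hys : ∑ i, y i = 0 := by
      simp only [hy, Finset.sum_sub_distrib, Finset.sum_const, card_univ, Fintype.card_fin,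
        nsmul_eq_mul, hm]
      field_simp
      ring
    have hΘx : (thetaOf Q).mulVec x = (thetaOf Q).mulVec y := by
      rw [hxy, Matrix.mulVec_add, Matrix.mulVec_smul, hone, smul_zero, add_zero]
    have hq : x ⬝ᵥ (thetaOf Q).mulVec x = y ⬝ᵥ (thetaOf Q).mulVec y := by
      rw [hΘx]
      have : (fun _ => (1 : ℝ)) ⬝ᵥ (thetaOf Q).mulVec y = 0 := by
        rw [Matrix.dotProduct_mulVec, ← Matrix.mulVec_transpose, (MT_theta_symm hQ.1).eq, hone,
          zero_dotProduct]
      conv_lhs => rw [hxy]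
      rw [add_dotProduct, smul_dotProduct, this, smul_zero, add_zero]
    have hE : x ⬝ᵥ (Matrix.single r r (1 : ℝ)).mulVec x = x r ^ 2 := by
      simp [Matrix.single_mulVec, dotProduct, Function.update_apply, sq]
    rw [star_trivial, Matrix.add_mulVec, dotProduct_add, hq, hE]
    by_cases h0 : y = 0
    · rw [h0, zero_dotProduct, zero_add]
      have hxr : x r ≠ 0 := by
        intro e
        apply hx
        have hm0 : m = 0 := by
          have := congrFun h0 r
          simp only [hy, e, Pi.zero_apply] at this
          linarith
        rw [hxy, h0, hm0]; simp
      positivity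
    · have := hQ.2.2 y h0 hys
      positivity

theorem MT_det_CM {d : ℕ} (hd : 0 < d) (Q S : Matrix (Fin d) (Fin d) ℝ)
    (hQ : memQ Q) (hS : isSigmaOf Q S) : tau Q * (CM (gammaOf S)).det = 1 := by
  let r : Fin d := ⟨0, hd⟩
  have hd' : (d : ℝ) ≠ 0 := by positivity
  let C : Matrix (Fin d ⊕ Fin 1) (Fin d ⊕ Fin 1) ℝ :=
    fromBlocks (Matrix.of fun i j => -gammaOf S i j / 2) (Matrix.of fun _ _ => 1)
      (Matrix.of fun _ _ => -1) 0
  have hC : (CM (gammaOf S)).det = C.det := by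
    rw [← Matrix.det_submatrix_equiv_self (finSumFinEquiv (m := d) (n := 1))]
    congr 1
    ext a b
    rcases a with a | a <;> rcases b with b | b <;> simp [CM, C]
  let L : Matrix (Fin d ⊕ Fin 1) (Fin d ⊕ Fin 1) ℝ :=
    fromBlocks 1 (Matrix.of fun i _ => -S i i / 2) 0 1
  let R : Matrix (Fin d ⊕ Fin 1) (Fin d ⊕ Fin 1) ℝ :=
    fromBlocks 1 0 (Matrix.of fun _ i => S i i / 2) 1
  have hL : L.det = 1 := by simp [L]
  have hR : R.det = 1 := by simp [R]
  let D : Matrix (Fin d ⊕ Fin 1) (Fin d ⊕ Fin 1) ℝ :=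
    fromBlocks S (Matrix.of fun _ _ => 1) (Matrix.of fun _ _ => -1) 0
  have hLCR : L * C * R = D := by
    simp only [L, C, R, D, fromBlocks_multiply]
    congr 1
    · ext i j
      simp [Matrix.mul_apply, gammaOf]
      ring
    · ext i j
      simp
    · ext i j
      simp
    · ext i j
      simp
  have hCD : C.det = D.det := by
    rw [← hLCR, Matrix.det_mul, Matrix.det_mul, hL, hR, one_mul, mul_one]
  let A : Matrix (Fin d ⊕ Fin 1) (Fin d ⊕ Fin 1) ℝ :=
    fromBlocks (thetaOf Q) (Matrix.of fun i _ => -(Pi.single r 1 : Fin d → ℝ) i)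
      (Matrix.of fun _ i => (Pi.single r 1 : Fin d → ℝ) i) 1
  have hA : A.det = tau Q := by
    rw [← MT_det_theta_add r Q hQ.1, Matrix.det_fromBlocks_one₂₂]
    congr 1
    ext i j
    simp [Matrix.mul_apply, Matrix.single_apply, Pi.single_apply, @eq_comm _ r, ite_and]
    split_ifs <;> ring
  let u : Fin d → ℝ := fun i => (Pi.single r 1 : Fin d → ℝ) i - (d : ℝ)⁻¹
  have hAD : A * D = fromBlocks
      (1 + replicateCol (Fin 1) u * replicateRow (Fin 1) (fun _ => (1 : ℝ))) 0
      (Matrix.of fun _ j => S r j - 1) 1 := by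
    simp only [A, D, fromBlocks_multiply]
    congr 1
    · rw [hS.2.2]
      ext i j
      simp [Matrix.mul_apply, Pmat, u]
      ring
    · ext i j
      simpa [Matrix.mul_apply] using MT_theta_row_sum Q i
    · ext i j
      simp [Matrix.mul_apply, Pi.single_apply]
      try ring
    · ext i j
      simp [Matrix.mul_apply, Pi.single_apply, Matrix.one_apply, Subsingleton.elim i j]
  rw [hC, hCD, ← hA, ← Matrix.det_mul, hAD, Matrix.det_fromBlocks_zero₁₂, Matrix.det_one, mul_one,
    Matrix.det_one_add_mul_comm, Matrix.det_fin_one]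
  simp [Matrix.mul_apply, dotProduct, u, Finset.sum_sub_distrib, hd']

/-- For every `Q ∈ 𝒬`, `det(CM(Γ(Q))) · τ(Q) = 1`; in particular `det(CM(Γ(Q))) > 0`
and `(1/2) log det(CM(Γ(Q))) = −(1/2) log τ(Q)`. -/
theorem det_CM_variogram_mul_tau {d : ℕ} (hd : 0 < d)
    (Q S : Matrix (Fin d) (Fin d) ℝ)
    (hQ : memQ Q) (hS : isSigmaOf Q S) :
    (CM (gammaOf S)).det * tau Q = 1 ∧
      0 < (CM (gammaOf S)).det ∧
      (1 / 2) * Real.log ((CM (gammaOf S)).det) = -(1 / 2) * Real.log (tau Q) := by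
  have h1 := MT_det_CM hd Q S hQ hS
  have hpos := MT_tau_pos hd Q hQ
  have h2 : (CM (gammaOf S)).det = (tau Q)⁻¹ := eq_inv_of_mul_eq_one_right h1
  refine ⟨by rw [mul_comm]; exact h1, by rw [h2]; positivity, ?_⟩
  rw [h2, Real.log_inv]
  ring
end

section
/- Let Γ* be a symmetric d×d real matrix with zero diagonal that is strictly conditionally negative definite, and suppose Q* ∈ 𝒬 satisfies Γ(Q*) = Γ*. Then Q* is the unique maximizer over 𝒬 of the surrogate log-likelihood ℓ(Q; Γ*) = (1/2) log τ(Q) − (1/2)⟨Γ*, Q⟩, and the maximum value equals −(d−1)/2 − (1/2) log det(CM(Γ*)). -/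
open Matrix Finset

namespace MT

/-- Parent function extended by fixing the root. -/
def ext {n : ℕ} (f : Fin n → Fin (n + 1)) : Fin (n + 1) → Fin (n + 1) := Fin.cases 0 f

/-- All vertices reach the root. -/
def Reach {n : ℕ} (f : Fin n → Fin (n + 1)) : Prop := ∀ i, ∃ k, (ext f)^[k] i = 0

@[simp] lemma ext_zero {n : ℕ} (f : Fin n → Fin (n + 1)) : ext f 0 = 0 := rfl
@[simp] lemma ext_succ {n : ℕ} (f : Fin n → Fin (n + 1)) (i : Fin n) : ext f i.succ = f i := rfl

lemma ext_iter_zero {n : ℕ} (f : Fin n → Fin (n + 1)) (k : ℕ) : (ext f)^[k] 0 = 0 := by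
  induction k with
  | zero => rfl
  | succ k ih => rw [Function.iterate_succ_apply, ext_zero, ih]

/-- A set closed under `ext f` not containing root is empty. -/
lemma Reach.not_closed {n : ℕ} {f : Fin n → Fin (n + 1)} (hf : Reach f) (B : Fin (n + 1) → Prop)
    (h0 : ¬ B 0) (hB : ∀ i, B i → B (ext f i)) (i : Fin (n + 1)) : ¬ B i := by
  intro hi
  obtain ⟨k, hk⟩ := hf i
  have : ∀ k, B ((ext f)^[k] i) := by
    intro k
    induction k with
    | zero => exact hi
    | succ k ih => rw [Function.iterate_succ_apply']; exact hB _ ih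
  exact h0 (hk ▸ this k)

lemma Reach.ne {n : ℕ} {f : Fin n → Fin (n + 1)} (hf : Reach f) (i : Fin n) : f i ≠ i.succ := by
  intro h
  refine hf.not_closed (fun j => j = i.succ) (Fin.succ_ne_zero i).symm ?_ i.succ rfl
  rintro _ rfl
  exact h

lemma Reach.no_two {n : ℕ} {f : Fin n → Fin (n + 1)} (hf : Reach f) (i j : Fin n)
    (h1 : f i = j.succ) (h2 : f j = i.succ) : False := by
  refine hf.not_closed (fun a => a = i.succ ∨ a = j.succ) ?_ ?_ i.succ (Or.inl rfl)
  · rintro (h | h) <;> exact (Fin.succ_ne_zero _) h.symm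
  · rintro _ (rfl | rfl)
    · exact Or.inr h1
    · exact Or.inl h2

/-- graph of a parent function -/
def gr {n : ℕ} (f : Fin n → Fin (n + 1)) : SimpleGraph (Fin (n + 1)) :=
  SimpleGraph.fromEdgeSet (Set.range fun i : Fin n => s(i.succ, f i))

lemma gr_adj {n : ℕ} {f : Fin n → Fin (n + 1)} (hf : Reach f) (a b : Fin (n + 1)) :
    (gr f).Adj a b ↔ ∃ i, s(i.succ, f i) = s(a, b) := by
  unfold gr
  rw [SimpleGraph.fromEdgeSet_adj]
  constructor
  · exact fun h => h.1
  · rintro ⟨i, hi⟩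
    refine ⟨⟨i, hi⟩, ?_⟩
    rintro rfl
    rw [Sym2.eq_iff] at hi
    rcases hi with h | h <;> exact hf.ne i (h.2.trans h.1.symm)

lemma edge_inj {n : ℕ} {f : Fin n → Fin (n + 1)} (hf : Reach f) :
    Function.Injective (fun i : Fin n => s(i.succ, f i)) := by
  intro i j h
  simp only [Sym2.eq_iff] at h
  rcases h with h | h
  · exact Fin.succ_injective _ h.1
  · exact (hf.no_two i j h.2 h.1.symm).elim

lemma gr_edgeSet {n : ℕ} {f : Fin n → Fin (n + 1)} (hf : Reach f) :
    (gr f).edgeSet = Set.range fun i : Fin n => s(i.succ, f i) := by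
  ext e
  induction e with
  | h a b => rw [SimpleGraph.mem_edgeSet, gr_adj hf]; rfl

lemma gr_connected {n : ℕ} {f : Fin n → Fin (n + 1)} (hf : Reach f) : (gr f).Connected := by
  have h0 : ∀ i, (gr f).Reachable i 0 := by
    intro i
    by_contra hi
    refine hf.not_closed (fun i => ¬ (gr f).Reachable i 0) (fun h => h .rfl) ?_ i hi
    intro j
    induction j using Fin.cases with
    | zero => exact id
    | succ j =>
      intro h h'
      apply h
      refine SimpleGraph.Reachable.trans (SimpleGraph.Adj.reachable ?_) h'
      exact (gr_adj hf _ _).2 ⟨j, rfl⟩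
  exact ⟨fun a b => (h0 a).trans (h0 b).symm⟩

lemma gr_isTree {n : ℕ} {f : Fin n → Fin (n + 1)} (hf : Reach f) : (gr f).IsTree := by
  rw [SimpleGraph.isTree_iff_connected_and_card]
  refine ⟨gr_connected hf, ?_⟩
  rw [gr_edgeSet hf, Nat.card_range_of_injective (edge_inj hf)]
  simp

lemma gr_inj {n : ℕ} {f g : Fin n → Fin (n + 1)} (hf : Reach f) (hg : Reach g)
    (h : gr f = gr g) : f = g := by
  funext i
  by_contra hi
  refine hf.not_closed (fun a => ext f a ≠ ext g a) (fun h => h rfl) ?_ i.succ hi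
  intro a
  induction a using Fin.cases with
  | zero => exact fun h => h
  | succ a =>
    intro ha
    simp only [ext_succ] at ha ⊢
    have h1 : (gr g).Adj a.succ (f a) := h ▸ (gr_adj hf _ _).2 ⟨a, rfl⟩
    obtain ⟨j, hj⟩ := (gr_adj hg _ _).1 h1
    rw [Sym2.eq_iff] at hj
    rcases hj with hj | hj
    · have := Fin.succ_injective _ hj.1
      subst this
      exact (ha hj.2.symm).elim
    · rw [← hj.1, ext_succ, ext_succ, hj.2]
      intro h2
      exact hf.no_two a j hj.1.symm h2

lemma gr_surj {n : ℕ} (T : SimpleGraph (Fin (n + 1))) (hT : T.IsTree) :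
    ∃ f : Fin n → Fin (n + 1), Reach f ∧ gr f = T := by
  have h1 : ∀ i : Fin n, ∃ j, T.Adj i.succ j ∧ T.dist i.succ 0 = T.dist j 0 + 1 := by
    intro i
    obtain ⟨p, hp⟩ := hT.1.exists_walk_length_eq_dist i.succ 0
    cases p with
    | cons hadj q =>
      refine ⟨_, hadj, ?_⟩
      rw [SimpleGraph.Walk.length_cons] at hp
      have h2 := SimpleGraph.dist_le q
      have h3 := hT.1.dist_triangle (u := i.succ) (v := _) (w := 0) |>.trans
        (Nat.add_le_add_right (SimpleGraph.dist_le hadj.toWalk) _)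
      simp at h3
      omega
  choose f hf hd using h1
  have hr : Reach f := by
    have : ∀ k i, T.dist i 0 = k → ∃ k, (ext f)^[k] i = 0 := by
      intro k
      induction k with
      | zero =>
        intro i hi
        rw [hT.1.dist_eq_zero_iff] at hi
        exact ⟨0, hi⟩
      | succ k ih =>
        intro i
        induction i using Fin.cases with
        | zero => exact fun _ => ⟨0, rfl⟩
        | succ i =>
          intro hi
          have := hd i
          obtain ⟨m, hm⟩ := ih (f i) (by omega)
          exact ⟨m + 1, hm⟩
    exact fun i => this _ i rfl
  refine ⟨f, hr, ?_⟩
  have hle : gr f ≤ T := by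
    intro a b hab
    obtain ⟨i, hi⟩ := (gr_adj hr _ _).1 hab
    rw [← SimpleGraph.mem_edgeSet, ← hi]
    exact hf i
  apply le_antisymm hle
  exact (SimpleGraph.isTree_iff_minimal_connected.1 hT).2 (gr_connected hr) hle

lemma prod_gr {n : ℕ} {f : Fin n → Fin (n + 1)} (hf : Reach f)
    (Q : Matrix (Fin (n + 1)) (Fin (n + 1)) ℝ) (hQ : Q.IsSymm)
    [DecidablePred fun p : Fin (n + 1) × Fin (n + 1) => p.1 < p.2 ∧ (gr f).Adj p.1 p.2] :
    ∏ p ∈ univ.filter (fun p : Fin (n + 1) × Fin (n + 1) => p.1 < p.2 ∧ (gr f).Adj p.1 p.2),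
      Q p.1 p.2 = ∏ i, Q i.succ (f i) := by
  symm
  have hmm : ∀ a b : Fin (n + 1), Q (min a b) (max a b) = Q a b := by
    intro a b
    rcases le_total a b with h | h
    · simp [h]
    · simp [h, hQ.apply]
  refine Finset.prod_bij (fun i _ => (min i.succ (f i), max i.succ (f i))) ?_ ?_ ?_ ?_
  · intro i _
    have hne := hf.ne i
    simp only [mem_filter, mem_univ, true_and]
    refine ⟨?_, (gr_adj hf _ _).2 ⟨i, ?_⟩⟩
    · simp [hne]
    · rcases le_total i.succ (f i) with h | h
      · simp [h]
      · simp [h, Sym2.eq_swap]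
  · intro i _ j _ h
    apply edge_inj hf
    simp only [Prod.mk.injEq] at h
    have : ∀ a b : Fin (n + 1), s(a, b) = s(min a b, max a b) := by
      intro a b
      rcases le_total a b with h | h
      · simp [h]
      · simp [h, Sym2.eq_swap]
    show s(_, _) = s(_, _)
    rw [this, h.1, h.2, ← this]
  · rintro ⟨a, b⟩ h
    simp only [mem_filter, mem_univ, true_and] at h
    obtain ⟨i, hi⟩ := (gr_adj hf _ _).1 h.2
    refine ⟨i, mem_univ _, ?_⟩
    rw [Sym2.eq_iff] at hi
    rcases hi with hi | hi
    · rw [hi.1, hi.2, min_eq_left h.1.le, max_eq_right h.1.le]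
    · rw [hi.1, hi.2, min_eq_right h.1.le, max_eq_left h.1.le]
  · intro i _
    exact (hmm _ _).symm

open Classical in
lemma tau_eq {n : ℕ} (Q : Matrix (Fin (n + 1)) (Fin (n + 1)) ℝ) (hQ : Q.IsSymm) :
    tau Q = ∑ f ∈ univ.filter (fun f : Fin n → Fin (n + 1) => Reach f), ∏ i, Q i.succ (f i) := by
  unfold tau
  symm
  refine Finset.sum_bij (fun f _ => gr f) ?_ ?_ ?_ ?_
  · intro f hf
    simp only [mem_filter, mem_univ, true_and] at hf ⊢
    exact gr_isTree hf
  · intro f hf g hg h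
    simp only [mem_filter, mem_univ, true_and] at hf hg
    exact gr_inj hf hg h
  · intro T hT
    simp only [mem_filter, mem_univ, true_and] at hT
    obtain ⟨f, hf, h⟩ := gr_surj T hT
    exact ⟨f, by simpa using hf, h⟩
  · intro f hf
    simp only [mem_filter, mem_univ, true_and] at hf
    exact (prod_gr hf Q hQ).symm

/-- rows of the functional matrix -/
def rowv {n : ℕ} (i : Fin n) (b : Fin (n + 1)) : Fin n → ℝ :=
  fun j => (if i = j then 1 else 0) - (if b = j.succ then 1 else 0)

/-- reduced Laplacian -/
noncomputable def red {n : ℕ} (Q : Matrix (Fin (n + 1)) (Fin (n + 1)) ℝ) :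
    Matrix (Fin n) (Fin n) ℝ := (thetaOf Q).submatrix Fin.succ Fin.succ

lemma theta_apply {d : ℕ} (Q : Matrix (Fin d) (Fin d) ℝ) (hd : ∀ i, Q i i = 0) (i j : Fin d) :
    thetaOf Q i j = (if i = j then ∑ l, Q i l else 0) - Q i j := by
  unfold thetaOf
  simp only [of_apply]
  split_ifs with h
  · subst h
    rw [hd, sub_zero, Finset.sum_filter]
    refine Finset.sum_congr rfl fun l _ => ?_
    split_ifs with h
    · rfl
    · rw [not_not.1 h, hd]
  · simp

lemma red_eq {n : ℕ} (Q : Matrix (Fin (n + 1)) (Fin (n + 1)) ℝ) (hd : ∀ i, Q i i = 0) :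
    red Q = fun i => ∑ b, Q i.succ b • rowv i b := by
  funext i j
  simp only [red, submatrix_apply, theta_apply Q hd, Finset.sum_apply, Pi.smul_apply, rowv,
    smul_eq_mul, mul_sub, Finset.sum_sub_distrib, Fin.succ_inj]
  congr 1
  · split_ifs <;> simp
  · simp

lemma det_not_reach {n : ℕ} {f : Fin n → Fin (n + 1)} (hf : ¬ Reach f) :
    Matrix.det (fun i => rowv i (f i)) = 0 := by
  classical
  unfold Reach at hf
  push Not at hf
  obtain ⟨a, ha⟩ := hf
  apply Matrix.exists_mulVec_eq_zero_iff.1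
  refine ⟨fun j => if ∃ k, (ext f)^[k] j.succ = 0 then 0 else 1, ?_, ?_⟩
  · induction a using Fin.cases with
    | zero => exact (ha 0 rfl).elim
    | succ a =>
      intro h
      have := congrFun h a
      simp [ha] at this
  · funext i
    simp only [mulVec, dotProduct, rowv, sub_mul, Finset.sum_sub_distrib, ite_mul, one_mul,
      zero_mul, Finset.sum_ite_eq, mem_univ, if_true, Pi.zero_apply]
    have key : (∃ k, (ext f)^[k] i.succ = 0) ↔ (∃ k, (ext f)^[k] (f i) = 0) := by
      constructor
      · rintro ⟨k, hk⟩
        cases k with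
        | zero => exact (Fin.succ_ne_zero _ hk).elim
        | succ k => exact ⟨k, hk⟩
      · rintro ⟨k, hk⟩
        exact ⟨k + 1, hk⟩
    simp only [key]
    generalize f i = b
    induction b using Fin.cases with
    | zero =>
      rw [if_pos ⟨0, rfl⟩]
      simp [(Fin.succ_ne_zero _).symm]
    | succ b => simp [Fin.succ_inj]

lemma det_reach {n : ℕ} {f : Fin n → Fin (n + 1)} (hf : Reach f) :
    Matrix.det (fun i => rowv i (f i)) = 1 := by
  classical
  -- depth function
  let dp : Fin (n + 1) → ℕ := fun i => Nat.find (hf i)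
  have hdp : ∀ i : Fin n, dp (f i) < dp i.succ := by
    intro i
    have h := Nat.find_spec (hf i.succ)
    change (ext f)^[dp i.succ] i.succ = 0 at h
    rcases hk : dp i.succ with _ | k
    · rw [hk] at h
      exact (Fin.succ_ne_zero _ h).elim
    · rw [hk] at h
      exact Nat.lt_succ_of_le (Nat.find_min' (hf (f i)) h)
  have hbt : Matrix.BlockTriangular (Matrix.of fun i => rowv i (f i))
      (fun i => OrderDual.toDual (dp i.succ)) := by
    intro i j hij
    have hij : dp i.succ < dp j.succ := hij
    have h1 : i ≠ j := by rintro rfl; exact lt_irrefl _ hij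
    have h2 : f i ≠ j.succ := by
      intro h; have := hdp i; rw [h] at this; omega
    simp [rowv, h1, h2]
  change Matrix.det (Matrix.of fun i => rowv i (f i)) = 1
  rw [hbt.det]
  refine Finset.prod_eq_one fun k _ => ?_
  have hone : (Matrix.of fun i => rowv i (f i)).toSquareBlock
      (fun i => OrderDual.toDual (dp i.succ)) k = 1 := ?_
  · rw [hone, Matrix.det_one]
  ext ⟨i, hi⟩ ⟨j, hj⟩
  have h2 : f i ≠ j.succ := by
    intro h
    have := hdp i
    rw [h] at this
    have h3 : dp i.succ = dp j.succ := OrderDual.toDual.injective (hi.trans hj.symm)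
    omega
  simp [Matrix.toSquareBlock, Matrix.toSquareBlockProp, rowv, h2, Matrix.one_apply]

/-- The weighted matrix tree theorem. -/
theorem matrix_tree {n : ℕ} (Q : Matrix (Fin (n + 1)) (Fin (n + 1)) ℝ) (hQ : Q.IsSymm)
    (hd : ∀ i, Q i i = 0) : tau Q = (red Q).det := by
  classical
  rw [tau_eq Q hQ, red_eq Q hd]
  have h := (Matrix.detRowAlternating (n := Fin n) (R := ℝ)).toMultilinearMap.map_sum
    (fun i b => Q i.succ b • rowv i b)
  refine Eq.trans ?_ h.symm
  rw [Finset.sum_filter]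
  refine Finset.sum_congr rfl fun f _ => ?_
  rw [MultilinearMap.map_smul_univ]
  change _ = _ • Matrix.det (fun i => rowv i (f i))
  split_ifs with hf
  · rw [det_reach hf]; simp
  · rw [det_not_reach hf]; simp

lemma theta_row_sum {d : ℕ} (Q : Matrix (Fin d) (Fin d) ℝ) (hd : ∀ i, Q i i = 0) (i : Fin d) :
    ∑ j, thetaOf Q i j = 0 := by
  simp [theta_apply Q hd, Finset.sum_sub_distrib]

lemma theta_symm {d : ℕ} (Q : Matrix (Fin d) (Fin d) ℝ) (hQ : Q.IsSymm) (hd : ∀ i, Q i i = 0)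
    (i j : Fin d) : thetaOf Q i j = thetaOf Q j i := by
  rw [theta_apply Q hd, theta_apply Q hd, hQ.apply]
  by_cases h : i = j
  · subst h; rfl
  · rw [if_neg h, if_neg (Ne.symm h)]

lemma red_posDef {n : ℕ} (Q : Matrix (Fin (n + 1)) (Fin (n + 1)) ℝ) (hQ : memQ Q) :
    (red Q).PosDef := by
  obtain ⟨hs, hd, hp⟩ := hQ
  refine Matrix.PosDef.of_dotProduct_mulVec_pos ?_ ?_
  · ext i j
    simp [red, theta_symm Q hs hd i.succ j.succ]
  · intro y hy
    set x : Fin (n + 1) → ℝ := Fin.cons 0 y with hx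
    set c : ℝ := (∑ i, x i) / (n + 1) with hc
    have hn : (n : ℝ) + 1 ≠ 0 := by positivity
    have h1 := hp (fun i => x i - c) ?_ ?_
    · have h2 : (thetaOf Q).mulVec (fun i => x i - c) = (thetaOf Q).mulVec x := by
        funext i
        simp [mulVec, dotProduct, mul_sub, Finset.sum_sub_distrib, ← Finset.sum_mul,
          theta_row_sum Q hd]
      have h3 : ∑ i, (thetaOf Q).mulVec x i = 0 := by
        simp only [mulVec, dotProduct]
        rw [Finset.sum_comm]
        refine Finset.sum_eq_zero fun j _ => ?_
        rw [← Finset.sum_mul]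
        simp_rw [theta_symm Q hs hd _ j]
        rw [theta_row_sum Q hd, zero_mul]
      have h4 : (fun i => x i - c) ⬝ᵥ (thetaOf Q).mulVec x = x ⬝ᵥ (thetaOf Q).mulVec x := by
        simp [dotProduct, sub_mul, Finset.sum_sub_distrib, ← Finset.mul_sum, h3]
      rw [h2, h4] at h1
      simpa [dotProduct, mulVec, Fin.sum_univ_succ, hx, red] using h1
    · intro h
      apply hy
      funext i
      have h0 := congrFun h 0
      have hi := congrFun h i.succ
      simp [hx] at h0 hi
      simp only [Pi.zero_apply]
      linarith
    · rw [Finset.sum_sub_distrib]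
      simp [hc]
      field_simp
      simp

/-- The matrix `R` associated with the variogram. -/
noncomputable def Rm {n : ℕ} (Γ : Matrix (Fin (n + 1)) (Fin (n + 1)) ℝ) :
    Matrix (Fin n) (Fin n) ℝ :=
  Matrix.of fun i j => (Γ i.succ 0 + Γ 0 j.succ - Γ i.succ j.succ) / 2

lemma red_mul_Rm {n : ℕ} (Q S : Matrix (Fin (n + 1)) (Fin (n + 1)) ℝ) (hQ : memQ Q)
    (hS : isSigmaOf Q S) : red Q * Rm (gammaOf S) = 1 := by
  obtain ⟨hs, hd, hp⟩ := hQ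
  obtain ⟨hSs, -, hT⟩ := hS
  ext i k
  rw [mul_apply]
  have hP : ∀ a b, ∑ j, thetaOf Q a j * S j b = Pmat (n + 1) a b := by
    intro a b; rw [← hT, mul_apply]
  have h1 : ∑ j, thetaOf Q i.succ j * (S j k.succ - S j 0 - S 0 k.succ + S 0 0)
      = Pmat (n + 1) i.succ k.succ - Pmat (n + 1) i.succ 0 := by
    simp only [mul_add, mul_sub, Finset.sum_add_distrib, Finset.sum_sub_distrib, hP,
      ← Finset.sum_mul, theta_row_sum Q hd]
    ring
  rw [Fin.sum_univ_succ] at h1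
  have h2 : ∑ j, red Q i j * Rm (gammaOf S) j k
      = ∑ j : Fin n, thetaOf Q i.succ j.succ *
        (S j.succ k.succ - S j.succ 0 - S 0 k.succ + S 0 0) := by
    refine Finset.sum_congr rfl fun j _ => ?_
    simp only [red, Rm, gammaOf, submatrix_apply, of_apply]
    ring
  rw [h2]
  have h3 : Pmat (n + 1) i.succ k.succ - Pmat (n + 1) i.succ 0 = (1 : Matrix (Fin n) (Fin n) ℝ) i k := by
    simp [Pmat, Matrix.one_apply, Fin.succ_inj]
  rw [← h3, ← h1]
  ring

lemma sinner_eq {n : ℕ} (Γ Q : Matrix (Fin (n + 1)) (Fin (n + 1)) ℝ) (hQs : Q.IsSymm)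
    (hQd : ∀ i, Q i i = 0) (hΓs : Γ.IsSymm) (hΓd : ∀ i, Γ i i = 0) :
    sinner Γ Q = (red Q * Rm Γ).trace := by
  have h1 : (red Q * Rm Γ).trace =
      ∑ i, ∑ j, thetaOf Q i j * ((Γ j 0 + Γ 0 i - Γ j i) / 2) := by
    rw [Fin.sum_univ_succ]
    simp only [hΓd, sub_self, add_zero, zero_div, mul_zero, Finset.sum_const_zero, zero_add,
      Fin.sum_univ_succ (f := fun j => thetaOf Q _ j * _)]
    simp [Matrix.trace, mul_apply, red, Rm]
  have hcol : ∀ j, ∑ i, thetaOf Q i j = 0 := fun j => by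
    simp_rw [theta_symm Q hQs hQd _ j]; exact theta_row_sum Q hQd j
  have h2 : ∑ i, ∑ j, thetaOf Q i j * ((Γ j 0 + Γ 0 i - Γ j i) / 2)
      = (∑ i, ∑ j, Q i j * Γ i j) / 2 := by
    have e1 : ∑ i, ∑ j, thetaOf Q i j * (Γ j 0) = 0 := by
      rw [Finset.sum_comm]
      simp [← Finset.sum_mul, hcol]
    have e2 : ∑ i, ∑ j, thetaOf Q i j * (Γ 0 i) = 0 := by
      simp [← Finset.sum_mul, theta_row_sum Q hQd]
    have e3 : ∀ i j, thetaOf Q i j * Γ j i = - (Q i j * Γ i j) := by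
      intro i j
      rw [theta_apply Q hQd, hΓs.apply]
      by_cases h : i = j
      · subst h; simp [hΓd]
      · simp [h]
    simp only [mul_div_assoc', ← Finset.sum_div, mul_sub, mul_add, Finset.sum_add_distrib,
      Finset.sum_sub_distrib, e1, e2, e3, Finset.sum_neg_distrib]
    ring
  rw [h1, h2, ← Finset.sum_product', Finset.univ_product_univ]
  have h3 : ∑ p : Fin (n + 1) × Fin (n + 1), Q p.1 p.2 * Γ p.1 p.2 =
      ∑ p ∈ univ.filter (fun p : Fin (n + 1) × Fin (n + 1) => p.1 < p.2), Q p.1 p.2 * Γ p.1 p.2 +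
      ∑ p ∈ univ.filter (fun p : Fin (n + 1) × Fin (n + 1) => p.2 < p.1), Q p.1 p.2 * Γ p.1 p.2 := by
    rw [Finset.sum_filter, Finset.sum_filter, ← Finset.sum_add_distrib]
    refine Finset.sum_congr rfl ?_
    rintro ⟨a, b⟩ -
    rcases lt_trichotomy a b with h | h | h
    · simp [h, h.not_gt]
    · subst h; simp [hQd]
    · simp [h, h.not_gt]
  have h4 : ∑ p ∈ univ.filter (fun p : Fin (n + 1) × Fin (n + 1) => p.2 < p.1), Q p.1 p.2 * Γ p.1 p.2
     = ∑ p ∈ univ.filter (fun p : Fin (n + 1) × Fin (n + 1) => p.1 < p.2), Q p.1 p.2 * Γ p.1 p.2 := by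
    refine Finset.sum_nbij' Prod.swap Prod.swap ?_ ?_ ?_ ?_ ?_
    · simp
    · simp
    · simp
    · simp
    · intro p _
      simp only [Prod.fst_swap, Prod.snd_swap]
      rw [hQs.apply, hΓs.apply]
  rw [h3, h4, sinner]
  simp_rw [mul_comm (Q _ _)]
  ring

lemma det_CM {n : ℕ} (Γ : Matrix (Fin (n + 1)) (Fin (n + 1)) ℝ) (hΓd : ∀ i, Γ i i = 0) :
    (CM Γ).det = (Rm Γ).det := by
  -- indices: `castSucc` embeds the vertices
  have cc : ∀ a b : Fin (n + 1), CM Γ a.castSucc b.castSucc = - Γ a b / 2 := by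
    intro a b; simp [CM, Nat.lt_succ_iff.1 a.2, Nat.lt_succ_iff.1 b.2]
  have cl : ∀ a : Fin (n + 1), CM Γ a.castSucc (Fin.last _) = 1 := by
    intro a; simp [CM, Nat.lt_succ_iff.1 a.2]
  have lc : ∀ a : Fin (n + 1), CM Γ (Fin.last _) a.castSucc = -1 := by
    intro a; simp [CM, Nat.lt_succ_iff.1 a.2]
  have ll : CM Γ (Fin.last _) (Fin.last _) = 0 := by simp [CM]
  let c : Fin (n + 1 + 1) → ℝ := Fin.snoc (Fin.cons 0 (fun _ => -1)) 0
  have c0 : c (Fin.castSucc 0) = 0 := by simp only [c, Fin.snoc_castSucc, Fin.cons_zero]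
  have cs : ∀ i : Fin n, c (Fin.castSucc i.succ) = -1 := by
    intro i; simp only [c, Fin.snoc_castSucc, Fin.cons_succ]
  have cL : c (Fin.last _) = 0 := by simp only [c, Fin.snoc_last]
  let A : Matrix (Fin (n + 1 + 1)) (Fin (n + 1 + 1)) ℝ :=
    Matrix.of fun i j => CM Γ i j + c i * CM Γ (Fin.castSucc 0) j
  let B : Matrix (Fin (n + 1 + 1)) (Fin (n + 1 + 1)) ℝ :=
    Matrix.of fun i j => A i j + c j * A i (Fin.castSucc 0)
  have hA : A.det = (CM Γ).det :=
    Matrix.det_eq_of_forall_row_eq_smul_add_const c (Fin.castSucc 0) c0 fun i j => rfl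
  have hB : B.det = A.det := by
    rw [← Matrix.det_transpose B, ← Matrix.det_transpose A]
    exact Matrix.det_eq_of_forall_row_eq_smul_add_const c (Fin.castSucc 0) c0 fun i j => rfl
  rw [← hA, ← hB, Matrix.det_succ_row B (Fin.last _), Fin.sum_univ_succ]
  have z1 : ∀ j : Fin (n + 1), B (Fin.last _) j.succ = 0 := by
    intro j
    induction j using Fin.lastCases with
    | last => simp [B, A, cL, ll]
    | cast j => 
      rw [Fin.succ_castSucc]
      simp only [B, A, of_apply, cL, lc, cs]; ring
  have z0 : B (Fin.last _) 0 = -1 := by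
    rw [← Fin.castSucc_zero]
    simp only [B, A, of_apply, cL, lc, c0]; ring
  simp only [z1, z0, mul_zero, zero_mul, Finset.sum_const_zero, add_zero]
  rw [Matrix.det_succ_column _ (Fin.last n), Fin.sum_univ_succ]
  have w1 : ∀ i : Fin n, B.submatrix (Fin.last _).succAbove (Fin.succAbove 0) i.succ (Fin.last n) = 0 := by
    intro i
    simp only [submatrix_apply, Fin.succAbove_last, Fin.succAbove_zero, Fin.succ_last]
    simp only [B, A, of_apply, cL, cl, cs]; ring
  have w0 : B.submatrix (Fin.last _).succAbove (Fin.succAbove 0) 0 (Fin.last n) = 1 := by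
    simp only [submatrix_apply, Fin.succAbove_last, Fin.succAbove_zero, Fin.succ_last]
    simp only [B, A, of_apply, cL, cl, c0]; ring
  simp only [w1, w0, mul_zero, zero_mul, Finset.sum_const_zero, add_zero]
  have hsub : ((B.submatrix (Fin.last _).succAbove (Fin.succAbove 0)).submatrix
      (Fin.succAbove 0) (Fin.last n).succAbove) = Rm Γ := by
    ext i j
    simp only [submatrix_apply, Fin.succAbove_last, Fin.succAbove_zero, Fin.succ_castSucc]
    simp only [B, A, of_apply, Rm, cc, cs, hΓd]; ring
  rw [hsub]
  simp only [Fin.val_last, Fin.val_zero, add_zero, zero_add]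
  have : ((-1 : ℝ)) ^ (n + 1) * -1 * ((-1) ^ n * 1 * (Rm Γ).det) = ((-1) ^ n * (-1) ^ n) * (Rm Γ).det := by
    ring
  rw [this, ← mul_pow]
  simp

lemma log_det_le {n : ℕ} (M : Matrix (Fin n) (Fin n) ℝ) (hM : M.PosDef) :
    Real.log M.det ≤ M.trace - n ∧ (Real.log M.det = M.trace - n → M = 1) := by
  have hpos := hM.eigenvalues_pos
  have hdet : Real.log M.det = ∑ i, Real.log (hM.1.eigenvalues i) := by
    rw [hM.1.det_eq_prod_eigenvalues, ← Real.log_prod (fun i _ => (hpos i).ne')]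
    simp
  have htr : M.trace - n = ∑ i, (hM.1.eigenvalues i - 1) := by
    rw [hM.1.trace_eq_sum_eigenvalues]
    simp
  rw [hdet, htr]
  have hle : ∀ i ∈ (univ : Finset (Fin n)), Real.log (hM.1.eigenvalues i) ≤ hM.1.eigenvalues i - 1 :=
    fun i _ => Real.log_le_sub_one_of_pos (hpos i)
  refine ⟨Finset.sum_le_sum hle, fun h => ?_⟩
  have h1 := (Finset.sum_eq_sum_iff_of_le hle).1 h
  have h2 : hM.1.eigenvalues = fun _ => 1 := by
    funext i
    by_contra hne
    exact (Real.log_lt_sub_one_of_pos (hpos i) hne).ne (h1 i (mem_univ _))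
  rw [hM.1.spectral_theorem, h2]
  have : (Matrix.diagonal (RCLike.ofReal ∘ fun _ : Fin n => (1 : ℝ)) : Matrix (Fin n) (Fin n) ℝ) = 1 := by
    ext i j; simp [Matrix.diagonal, Matrix.one_apply]
  rw [this, map_one]

open scoped MatrixOrder in
lemma log_det_rel {n : ℕ} (A B R : Matrix (Fin n) (Fin n) ℝ) (hA : A.PosDef) (hB : B.PosDef)
    (hR : B * R = 1) :
    Real.log A.det - (A * R).trace ≤ Real.log B.det - n ∧
    (Real.log A.det - (A * R).trace = Real.log B.det - n → A = B) := by
  have hRB : R = B⁻¹ := (Matrix.inv_eq_right_inv hR).symm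
  have hRp : R.PosDef := hRB ▸ hB.inv
  obtain ⟨C, hCu, hC⟩ : ∃ C : Matrix (Fin n) (Fin n) ℝ, IsUnit C ∧ R = Cᴴ * C := by
    obtain ⟨C, hC⟩ := CStarAlgebra.nonneg_iff_eq_star_mul_self.mp hRp.posSemidef.nonneg
    refine ⟨C, ?_, hC⟩
    have hu := hRp.isUnit
    rw [hC] at hu
    rw [Matrix.isUnit_iff_isUnit_det, Matrix.det_mul] at hu
    rw [Matrix.isUnit_iff_isUnit_det]
    exact isUnit_of_mul_isUnit_right hu
  have hM : (C * A * Cᴴ).PosDef := by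
    have := (Matrix.IsUnit.posDef_star_right_conjugate_iff (x := A) hCu).2 hA
    exact this
  have htr : (C * A * Cᴴ).trace = (A * R).trace := by
    rw [hC, Matrix.trace_mul_comm (C * A), ← mul_assoc, Matrix.trace_mul_comm]
  have hdet : (C * A * Cᴴ).det = A.det * R.det := by
    rw [hC]; simp only [det_mul]; ring
  have hBR : B.det * R.det = 1 := by rw [← det_mul, hR, det_one]
  have hlog : Real.log (C * A * Cᴴ).det = Real.log A.det - Real.log B.det := by
    have : R.det = (B.det)⁻¹ := eq_inv_of_mul_eq_one_right hBR
    rw [hdet, this, Real.log_mul hA.det_pos.ne' (inv_ne_zero hB.det_pos.ne'), Real.log_inv]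
    ring
  obtain ⟨h1, h2⟩ := log_det_le _ hM
  rw [hlog, htr] at h1 h2
  refine ⟨by linarith, fun h => ?_⟩
  have h3 := h2 (by linarith)
  have h4 : A * R = 1 := by
    rw [hC, ← mul_assoc]
    rw [mul_assoc C] at h3
    exact mul_eq_one_comm.1 (by rw [← mul_assoc] at h3 ⊢; exact h3)
  have h5 := Matrix.inv_eq_right_inv h4
  have h6 : R * B = 1 := mul_eq_one_comm.1 hR
  calc A = A * (R * B) := by rw [h6, mul_one]
    _ = B := by rw [← mul_assoc, h4, one_mul]

lemma red_inj {n : ℕ} (Q Q' : Matrix (Fin (n + 1)) (Fin (n + 1)) ℝ) (hQ : memQ Q) (hQ' : memQ Q')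
    (h : red Q = red Q') : Q = Q' := by
  obtain ⟨hs, hd, -⟩ := hQ
  obtain ⟨hs', hd', -⟩ := hQ'
  have h1 : ∀ i j : Fin n, Q i.succ j.succ = Q' i.succ j.succ := by
    intro i j
    have := congrFun (congrFun h i) j
    simp only [red, submatrix_apply, theta_apply Q hd, theta_apply Q' hd'] at this
    by_cases hij : i = j
    · subst hij; rw [hd, hd']
    · simpa [hij] using this
  have h2 : ∀ i : Fin n, Q i.succ 0 = Q' i.succ 0 := by
    intro i
    have := congrFun (congrFun h i) i
    simp only [red, submatrix_apply, theta_apply Q hd, theta_apply Q' hd', if_true, hd, hd',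
      sub_zero, Fin.sum_univ_succ, h1] at this
    linarith
  ext i j
  induction i using Fin.cases with
  | zero =>
    induction j using Fin.cases with
    | zero => rw [hd, hd']
    | succ j => rw [← hs.apply, ← hs'.apply, h2]
  | succ i =>
    induction j using Fin.cases with
    | zero => exact h2 i
    | succ j => exact h1 i j

end MT

/-- If `Γ(Q*) = Γ*`, then `Q*` is the unique maximizer over `𝒬` of the surrogate
log-likelihood `ℓ(Q; Γ*) = (1/2) log τ(Q) − (1/2)⟨Γ*, Q⟩`, and the maximum value is
`−(d−1)/2 − (1/2) log det(CM(Γ*))`. -/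
theorem surrogate_mle_unconstrained {d : ℕ} (hd : 0 < d)
    (Γs Qs S : Matrix (Fin d) (Fin d) ℝ)
    (hΓsym : Γs.IsSymm) (hΓdiag : ∀ i, Γs i i = 0)
    (hΓscnd : ∀ x : Fin d → ℝ, x ≠ 0 → (∑ i, x i) = 0 → x ⬝ᵥ Γs.mulVec x < 0)
    (hQs : memQ Qs) (hS : isSigmaOf Qs S) (hΓQs : gammaOf S = Γs) :
    (∀ Q, memQ Q →
        (1 / 2) * Real.log (tau Q) - (1 / 2) * sinner Γs Q ≤
          (1 / 2) * Real.log (tau Qs) - (1 / 2) * sinner Γs Qs) ∧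
    (∀ Q, memQ Q →
        (1 / 2) * Real.log (tau Q) - (1 / 2) * sinner Γs Q =
          (1 / 2) * Real.log (tau Qs) - (1 / 2) * sinner Γs Qs → Q = Qs) ∧
    (1 / 2) * Real.log (tau Qs) - (1 / 2) * sinner Γs Qs =
      -((d : ℝ) - 1) / 2 - (1 / 2) * Real.log ((CM Γs).det) := by
  obtain ⟨n, rfl⟩ : ∃ n, d = n + 1 := ⟨d - 1, by omega⟩
  have hR : MT.red Qs * MT.Rm Γs = 1 := hΓQs ▸ MT.red_mul_Rm Qs S hQs hS
  have hBp := MT.red_posDef Qs hQs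
  have hval : sinner Γs Qs = n := by
    rw [MT.sinner_eq Γs Qs hQs.1 hQs.2.1 hΓsym hΓdiag, hR]
    simp
  have key : ∀ Q, memQ Q → _ := fun Q hQ =>
    MT.log_det_rel (MT.red Q) (MT.red Qs) (MT.Rm Γs) (MT.red_posDef Q hQ) hBp hR
  refine ⟨fun Q hQ => ?_, fun Q hQ h => ?_, ?_⟩
  · have h := (key Q hQ).1
    rw [MT.matrix_tree Q hQ.1 hQ.2.1, MT.matrix_tree Qs hQs.1 hQs.2.1, hval,
      MT.sinner_eq Γs Q hQ.1 hQ.2.1 hΓsym hΓdiag]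
    linarith
  · rw [MT.matrix_tree Q hQ.1 hQ.2.1, MT.matrix_tree Qs hQs.1 hQs.2.1, hval,
      MT.sinner_eq Γs Q hQ.1 hQ.2.1 hΓsym hΓdiag] at h
    exact MT.red_inj Q Qs hQ hQs ((key Q hQ).2 (by linarith))
  · rw [MT.matrix_tree Qs hQs.1 hQs.2.1, hval, MT.det_CM Γs hΓdiag]
    have hdet : (MT.red Qs).det * (MT.Rm Γs).det = 1 := by rw [← det_mul, hR, det_one]
    rw [eq_inv_of_mul_eq_one_right hdet, Real.log_inv]
    push_cast
    ring
end
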